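/- Let G ↷ (X, μ) be a pmp action of a countable group, let F be a G-invariant sub-σ-algebra, and let P and Q be countable Borel partitions of X with H_μ(P | F) < ∞ and H_μ(Q | F) < ∞. Then |rh_{G,μ}(P | F) − rh_{G,μ}(Q | F)| ≤ H_μ(P | σ(Q) ∨ F) + H_μ(Q | σ(P) ∨ F), where σ(P) and σ(Q) denote the σ-algebras generated by the partitions P and Q. -/

import Mathlib

open MeasureTheory Set Function
open scoped ENNReal symmDiff

/-- A set in a measurable space is *analytic* if it is the image of a Borel subset of a
standard Borel space under a Borel (measurable) map. -/
def IsAnalyticS {W : Type*} [MeasurableSpace W] (A : Set W) : Prop :=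
  ∃ (Z : Type) (mZ : MeasurableSpace Z), @StandardBorelSpace Z mZ ∧
    ∃ (B : Set Z) (f : Z → W), MeasurableSet[mZ] B ∧ @Measurable Z W mZ _ f ∧ f '' B = A

/-- The smallest `G`-invariant sub-σ-algebra containing the collection `ξ`. -/
def sigmaG (G : Type*) {X : Type*} [Group G] [MulAction G X] (ξ : Set (Set X)) :
    MeasurableSpace X :=
  MeasurableSpace.generateFrom {B | ∃ (g : G), ∃ A ∈ ξ, B = (fun x => g • x) ⁻¹' A}

/-- The σ-algebra of `G`-invariant measurable sets. -/
def invSigma (G X : Type*) [Group G] [MulAction G X] [MeasurableSpace X] :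
    MeasurableSpace X :=
  MeasurableSpace.generateFrom {A | MeasurableSet A ∧ ∀ g : G, (fun x => g • x) ⁻¹' A = A}

/-- Conditional Shannon entropy `H_μ(α | m)` of a countable partition `α` given a
sub-σ-algebra `m`, valued in `[0,∞]`. -/
noncomputable def condEnt {X : Type*} (m : MeasurableSpace X) [mX : MeasurableSpace X]
    (μ : Measure X) {ι : Type*} (α : ι → Set X) : ℝ≥0∞ :=
  ∫⁻ x, ∑' i, ENNReal.ofReal
    (Real.negMulLog ((μ[(α i).indicator (fun _ => (1 : ℝ)) | m]) x)) ∂μ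

/-- Shannon entropy `H_μ(α)` of a countable partition. -/
noncomputable def shEnt {X : Type*} [MeasurableSpace X] (μ : Measure X)
    {ι : Type*} (α : ι → Set X) : ℝ≥0∞ :=
  ∑' i, ENNReal.ofReal (Real.negMulLog (μ (α i)).toReal)

/-- `α` is a countable Borel partition of `X` (indexed by `ℕ`, cells may be empty). -/
def IsPartition {X : Type*} [MeasurableSpace X] (α : ℕ → Set X) : Prop :=
  (∀ i, MeasurableSet (α i)) ∧ Pairwise (Function.onFun Disjoint α) ∧ (⋃ i, α i) = univ

/-- Every set of `ξ` agrees with an `m`-measurable set modulo `μ`-null sets. -/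
def SubsetMod {X : Type*} (m : MeasurableSpace X) [mX : MeasurableSpace X] (μ : Measure X)
    (ξ : Set (Set X)) : Prop :=
  ∀ A ∈ ξ, ∃ B, MeasurableSet[m] B ∧ μ (A ∆ B) = 0

/-- Outer Rokhlin entropy `rh_{G,μ}(ξ | F)`. -/
noncomputable def outerRokhlin (G : Type*) {X : Type*} (ξ : Set (Set X))
    (F : MeasurableSpace X) [Group G] [MulAction G X] [mX : MeasurableSpace X]
    (μ : Measure X) : ℝ≥0∞ :=
  sInf { h | ∃ α : ℕ → Set X, IsPartition α ∧
      SubsetMod (sigmaG G (Set.range α) ⊔ F ⊔ invSigma G X) μ ξ ∧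
      h = condEnt (F ⊔ invSigma G X) μ α }

/-- Rokhlin entropy `rh_G(X, μ | F)`. -/
noncomputable def rokhlin (G : Type*) {X : Type*} (F : MeasurableSpace X) [Group G]
    [MulAction G X] [mX : MeasurableSpace X] (μ : Measure X) : ℝ≥0∞ :=
  outerRokhlin G {A | MeasurableSet A} F μ

/-- Outer Rokhlin entropy `rh_{G,μ}(S | F)` of a sub-σ-algebra `S`. -/
noncomputable def outerRokhlinAlg (G : Type*) {X : Type*} (S F : MeasurableSpace X) [Group G]
    [MulAction G X] [mX : MeasurableSpace X] (μ : Measure X) : ℝ≥0∞ :=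
  outerRokhlin G {A | MeasurableSet[S] A} F μ

/-- The action of `G` on `(X, μ)` is probability-measure-preserving. -/
def IsPmp (G : Type*) {X : Type*} [Group G] [MulAction G X] [MeasurableSpace X]
    (μ : Measure X) : Prop :=
  ∀ g : G, MeasurePreserving (fun x => g • x) μ μ

/-- Aperiodicity: μ-almost-every `G`-orbit is infinite. -/
def Aperiodic (G : Type*) {X : Type*} [Group G] [MulAction G X] [MeasurableSpace X]
    (μ : Measure X) : Prop :=
  ∀ᵐ x ∂μ, (MulAction.orbit G x).Infinite

/-- Ergodicity of a measure: every invariant Borel set is null or conull. -/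
def IsErgodicInv (G : Type*) {X : Type*} [Group G] [MulAction G X] [MeasurableSpace X]
    (ν : Measure X) : Prop :=
  ∀ A : Set X, MeasurableSet A → (∀ g : G, (fun x => g • x) ⁻¹' A = A) → ν A = 0 ∨ ν A = 1

/-- `F` is a `G`-invariant σ-algebra. -/
def InvariantAlg (G : Type*) {X : Type*} (F : MeasurableSpace X) [Group G] [MulAction G X] :
    Prop :=
  ∀ (g : G) (A : Set X), MeasurableSet[F] A → MeasurableSet[F] ((fun x => g • x) ⁻¹' A)

/-- `F` is countably generated. -/
def CountablyGen {X : Type*} (F : MeasurableSpace X) : Prop :=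
  ∃ S : Set (Set X), S.Countable ∧ F = MeasurableSpace.generateFrom S

/-- `π` is an ergodic decomposition map for `μ`. -/
def IsErgDecomp (G : Type*) {X : Type*} [Group G] [MulAction G X] [MeasurableSpace X]
    (μ : Measure X) (π : X → Measure X) : Prop :=
  Measurable π ∧
  (∀ x, IsProbabilityMeasure (π x) ∧ IsPmp G (π x) ∧ IsErgodicInv G (π x)) ∧
  (∀ (g : G) (x : X), π (g • x) = π x) ∧
  (∀ ν : Measure X, IsProbabilityMeasure ν → IsPmp G ν → IsErgodicInv G ν →
      ν {x | π x = ν} = 1) ∧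
  (∀ B : Set X, MeasurableSet B → μ B = ∫⁻ x, π x B ∂μ)

/-! Let `α` be a partition that determines `Q` over `F`, and put `m = F ∨ I_G` and
`m' = σ(Q) ∨ m`. It suffices to describe `P` by a partition of entropy at most
`H(α | m) + H(P | m') + ε` over `m`, which is done separately on three invariant pieces of `X`.

* Where `α` is trivial over `m` on the whole orbit, so is `m'`, and `P` itself serves.
* Where a Borel set `C` meets each orbit once, at a point at which `α` is not trivial over `m`,
  the set `C` determines everything, and mass transport shows that it is no more expensive
  than `α`.
* Elsewhere there are sets `D` of arbitrarily small measure meeting every orbit. Describe `α`,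
  the set `D`, and, at each point of `D`, the list of the labels of `P` along the part of the
  orbit assigned to that point, one list for each of finitely many cells that approximate the
  conditional law of `P` given `m'`. Coding the labels in a cell with the weights given by that
  law costs `H(P | m')`, and the lengths of the lists cost little because `D` is sparse. As `α`
  determines `m'`, hence the cells, the lists return the labels of `P`. -/

open ProbabilityTheory
open Filter (Tendsto atTop)
open scoped Topology

section Surprisal

/-- The surprisal `-log t` of an event of probability `t`, as an extended nonnegative real.
Since `Real.log 0 = 0`, an impossible event gets surprisal `0`, not `∞`. -/
noncomputable def surprisal (t : ℝ) : ℝ≥0∞ := ENNReal.ofReal (-Real.log t)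

lemma surprisal_one : surprisal 1 = 0 := by simp [surprisal]

lemma surprisal_anti {s t : ℝ} (hs : 0 < s) (hst : s ≤ t) : surprisal t ≤ surprisal s :=
  ENNReal.ofReal_le_ofReal (neg_le_neg (Real.log_le_log hs hst))

lemma surprisal_mul_le {s t : ℝ} (hs : s ≠ 0) (ht : t ≠ 0) :
    surprisal (s * t) ≤ surprisal s + surprisal t := by
  rw [surprisal, Real.log_mul hs ht, neg_add]
  exact ENNReal.ofReal_add_le

lemma surprisal_prod_le {κ : Type*} (F : Finset κ) {t : κ → ℝ} (ht : ∀ k, t k ≠ 0) :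
    surprisal (∏ k ∈ F, t k) ≤ ∑ k ∈ F, surprisal (t k) := by
  classical
  induction F using Finset.induction_on with
  | empty => simp [surprisal_one]
  | insert k F hk ih =>
    rw [Finset.prod_insert hk, Finset.sum_insert hk]
    exact (surprisal_mul_le (ht k) (Finset.prod_ne_zero_iff.2 fun j _ => ht j)).trans (by gcongr)

lemma ofReal_mul_surprisal {s : ℝ} (hs : 0 ≤ s) (t : ℝ) :
    ENNReal.ofReal s * surprisal t = ENNReal.ofReal (s * -Real.log t) :=
  (ENNReal.ofReal_mul hs).symm

lemma ofReal_negMulLog {t : ℝ} (ht : 0 ≤ t) :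
    ENNReal.ofReal (Real.negMulLog t) = ENNReal.ofReal t * surprisal t := by
  rw [ofReal_mul_surprisal ht, Real.negMulLog, neg_mul_comm]

lemma negMulLog_add_le {t q : ℝ} (ht : 0 ≤ t) (hq : 0 ≤ q) (h0 : q = 0 → t = 0) :
    Real.negMulLog t + t ≤ t * -Real.log q + q := by
  rcases ht.eq_or_lt with rfl | ht
  · simpa using hq
  have hq' : 0 < q := hq.lt_of_ne fun h => ht.ne' (h0 h.symm)
  have hlog : t * Real.log (q / t) ≤ q - t :=
    calc t * Real.log (q / t) ≤ t * (q / t - 1) := by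
          gcongr; exact Real.log_le_sub_one_of_pos (div_pos hq' ht)
      _ = q - t := by field_simp
  rw [Real.log_div hq'.ne' ht.ne'] at hlog
  rw [Real.negMulLog]
  linarith

end Surprisal

section ShannonEntropy

variable {X ι κ : Type*}

/-- The partition of `X` into the fibres of `a`. Countable partitions are coded by measurable
functions into countable types throughout. -/
def fibers (a : X → ι) (i : ι) : Set X := a ⁻¹' {i}

variable [MeasurableSpace X]

lemma ae_measure_fibers_ne_zero [Countable ι] (ν : Measure X) (a : X → ι) :
    ∀ᵐ x ∂ν, ν (fibers a (a x)) ≠ 0 := by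
  have hnull : ∀ᵐ x ∂ν, ∀ i, ν (fibers a i) = 0 → a x ≠ i :=
    ae_all_iff.2 fun i => by
      by_cases hi : ν (fibers a i) = 0
      · filter_upwards [compl_mem_ae_iff.2 hi] with x hx _ using hx
      · exact .of_forall fun x h => absurd h hi
  filter_upwards [hnull] with x hx h0 using hx _ h0 rfl

variable [MeasurableSpace ι] [MeasurableSingletonClass ι] {a : X → ι} {b : X → κ}

lemma measurableSet_fibers (ha : Measurable a) (i : ι) : MeasurableSet (fibers a i) :=
  ha (measurableSet_singleton i)

variable [MeasurableSpace κ] [MeasurableSingletonClass κ] [Countable ι]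

lemma lintegral_comp_eq_tsum (ν : Measure X) (ha : Measurable a) (f : ι → ℝ≥0∞) :
    ∫⁻ x, f (a x) ∂ν = ∑' i, f i * ν (fibers a i) := by
  rw [← lintegral_map (measurable_of_countable f) ha, lintegral_countable']
  exact tsum_congr fun i => by rw [Measure.map_apply ha (measurableSet_singleton i), fibers]

lemma tsum_measure_fibers (ν : Measure X) (ha : Measurable a) :
    ∑' i, ν (fibers a i) = ν univ := by
  simpa using (lintegral_comp_eq_tsum ν ha 1).symm

variable (ν : Measure X)

lemma measurable_surprisal_fibers (ha : Measurable a) :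
    Measurable fun x => surprisal (ν.real (fibers a (a x))) :=
  (measurable_of_countable fun i => surprisal (ν.real (fibers a i))).comp ha

lemma shEnt_fibers_eq_lintegral [IsFiniteMeasure ν] (ha : Measurable a) :
    shEnt ν (fibers a) = ∫⁻ x, surprisal (ν.real (fibers a (a x))) ∂ν := by
  rw [lintegral_comp_eq_tsum ν ha fun i => surprisal (ν.real (fibers a i))]
  refine tsum_congr fun i => ?_
  rw [ofReal_negMulLog ENNReal.toReal_nonneg, ENNReal.ofReal_toReal (measure_ne_top _ _), mul_comm,
    Measure.real]

lemma shEnt_fibers_le_lintegral_surprisal [IsProbabilityMeasure ν] (ha : Measurable a)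
    {q : ι → ℝ} (hq : ∀ i, 0 ≤ q i) (hsum : ∑' i, ENNReal.ofReal (q i) ≤ 1)
    (hac : ∀ i, q i = 0 → ν (fibers a i) = 0) :
    shEnt ν (fibers a) ≤ ∫⁻ x, surprisal (q (a x)) ∂ν := by
  have hq1 (i : ι) : q i ≤ 1 := ENNReal.ofReal_le_one.1 ((ENNReal.le_tsum i).trans hsum)
  have hmass : ∑' i, ENNReal.ofReal (ν.real (fibers a i)) = 1 := by
    simp [tsum_measure_fibers ν ha]
  rw [lintegral_comp_eq_tsum ν ha fun i => surprisal (q i)]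
  refine (ENNReal.add_le_add_iff_right ENNReal.one_ne_top).1 ?_
  calc shEnt ν (fibers a) + 1
      = ∑' i, (ENNReal.ofReal (Real.negMulLog (ν.real (fibers a i)))
          + ENNReal.ofReal (ν.real (fibers a i))) := by rw [ENNReal.tsum_add, hmass]; rfl
    _ ≤ ∑' i, (surprisal (q i) * ν (fibers a i) + ENNReal.ofReal (q i)) := by
      refine ENNReal.tsum_le_tsum fun i => ?_
      have hlog : 0 ≤ -Real.log (q i) := neg_nonneg.2 (Real.log_nonpos (hq i) (hq1 i))
      rw [← ENNReal.ofReal_add (Real.negMulLog_nonneg measureReal_nonneg measureReal_le_one)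
          measureReal_nonneg, mul_comm, ← ofReal_measureReal,
          ofReal_mul_surprisal measureReal_nonneg,
        ← ENNReal.ofReal_add (mul_nonneg measureReal_nonneg hlog) (hq i)]
      exact ENNReal.ofReal_le_ofReal
        (negMulLog_add_le measureReal_nonneg (hq i) fun h => by simp [Measure.real, hac i h])
    _ ≤ ∑' i, surprisal (q i) * ν (fibers a i) + 1 := by rw [ENNReal.tsum_add]; gcongr

lemma shEnt_fibers_comp_le [Countable κ] [IsFiniteMeasure ν] (ha : Measurable a) (f : ι → κ) :
    shEnt ν (fibers (f ∘ a)) ≤ shEnt ν (fibers a) := by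
  rw [shEnt_fibers_eq_lintegral ν ha,
    shEnt_fibers_eq_lintegral ν ((measurable_of_countable f).comp ha)]
  refine lintegral_mono_ae ?_
  filter_upwards [ae_measure_fibers_ne_zero ν a] with x hx
  exact surprisal_anti (ENNReal.toReal_pos hx (measure_ne_top _ _))
    (measureReal_mono fun y hy => congrArg f hy)

lemma shEnt_fibers_prodMk_le [Countable κ] [IsProbabilityMeasure ν] (ha : Measurable a)
    (hb : Measurable b) :
    shEnt ν (fibers fun x => (a x, b x)) ≤ shEnt ν (fibers a) + shEnt ν (fibers b) := by
  have hle_left (p : ι × κ) : fibers (fun x => (a x, b x)) p ⊆ fibers a p.1 :=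
    fun x hx => congrArg Prod.fst hx
  have hle_right (p : ι × κ) : fibers (fun x => (a x, b x)) p ⊆ fibers b p.2 :=
    fun x hx => congrArg Prod.snd hx
  calc shEnt ν (fibers fun x => (a x, b x))
      ≤ ∫⁻ x, surprisal (ν.real (fibers a (a x)) * ν.real (fibers b (b x))) ∂ν := by
        refine shEnt_fibers_le_lintegral_surprisal ν (ha.prodMk hb)
          (q := fun p => ν.real (fibers a p.1) * ν.real (fibers b p.2)) (fun p => by positivity)
          ?_ fun p hp => ?_
        · calc ∑' p : ι × κ, ENNReal.ofReal (ν.real (fibers a p.1) * ν.real (fibers b p.2))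
              = ∑' p : ι × κ, ν (fibers a p.1) * ν (fibers b p.2) := by
                simp [ENNReal.ofReal_mul measureReal_nonneg]
            _ = (∑' i, ν (fibers a i)) * ∑' j, ν (fibers b j) := by
                rw [ENNReal.tsum_prod (f := fun i j => ν (fibers a i) * ν (fibers b j))]
                simp only [ENNReal.tsum_mul_left, ENNReal.tsum_mul_right]
            _ ≤ 1 := by simp [tsum_measure_fibers ν ha, tsum_measure_fibers ν hb]
        · rcases mul_eq_zero.1 hp with h | h
          · exact measure_mono_null (hle_left p) ((measureReal_eq_zero_iff).1 h)
          · exact measure_mono_null (hle_right p) ((measureReal_eq_zero_iff).1 h)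
    _ ≤ ∫⁻ x, surprisal (ν.real (fibers a (a x))) + surprisal (ν.real (fibers b (b x))) ∂ν := by
        refine lintegral_mono_ae ?_
        filter_upwards [ae_measure_fibers_ne_zero ν a, ae_measure_fibers_ne_zero ν b]
          with x hxa hxb
        exact surprisal_mul_le ((measureReal_ne_zero_iff).2 hxa) ((measureReal_ne_zero_iff).2 hxb)
    _ = shEnt ν (fibers a) + shEnt ν (fibers b) := by
        rw [shEnt_fibers_eq_lintegral ν ha, shEnt_fibers_eq_lintegral ν hb,
          lintegral_add_left (measurable_surprisal_fibers ν ha)]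

lemma shEnt_fibers_pi_le {n : Type*} [Fintype n] [IsProbabilityMeasure ν] {c : n → X → ι}
    (hc : ∀ k, Measurable (c k)) :
    shEnt ν (fibers fun x k => c k x) ≤ ∑ k, shEnt ν (fibers (c k)) := by
  have hprod (s : n → ι) : ENNReal.ofReal (∏ k, ν.real (fibers (c k) (s k)))
      = Measure.pi (fun k => ν.map (c k)) {s} := by
    have (k : n) : IsProbabilityMeasure (ν.map (c k)) :=
      Measure.isProbabilityMeasure_map (hc k).aemeasurable
    simp [ENNReal.ofReal_prod_of_nonneg, Measure.pi_singleton,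
      Measure.map_apply (hc _) (measurableSet_singleton _), fibers]
  have hcm : Measurable fun x k => c k x := measurable_pi_lambda _ hc
  calc shEnt ν (fibers fun x k => c k x)
      ≤ ∫⁻ x, surprisal (∏ k, ν.real (fibers (c k) (c k x))) ∂ν := by
        refine shEnt_fibers_le_lintegral_surprisal ν hcm
          (q := fun s => ∏ k, ν.real (fibers (c k) (s k)))
          (fun s => Finset.prod_nonneg fun _ _ => measureReal_nonneg) ?_ fun s hs => ?_
        · have (k : n) : IsProbabilityMeasure (ν.map (c k)) :=
            Measure.isProbabilityMeasure_map (hc k).aemeasurable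
          simp only [hprod]
          exact (tsum_measure_fibers (Measure.pi fun k => ν.map (c k))
            measurable_id).le.trans_eq measure_univ
        · obtain ⟨k, -, hk⟩ := Finset.prod_eq_zero_iff.1 hs
          exact measure_mono_null (fun x hx => congrFun hx k) ((measureReal_eq_zero_iff).1 hk)
    _ ≤ ∫⁻ x, ∑ k, surprisal (ν.real (fibers (c k) (c k x))) ∂ν := by
        refine lintegral_mono_ae ?_
        filter_upwards [ae_all_iff.2 fun k => ae_measure_fibers_ne_zero ν (c k)] with x hx
        exact surprisal_prod_le _ fun k => (measureReal_ne_zero_iff).2 (hx k)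
    _ = ∑ k, shEnt ν (fibers (c k)) := by
        rw [lintegral_finsetSum _ fun k _ => measurable_surprisal_fibers ν (hc k)]
        exact Finset.sum_congr rfl fun k _ => (shEnt_fibers_eq_lintegral ν (hc k)).symm

lemma binEntropy_le_binEntropy {t s : ℝ} (h0 : 0 ≤ t) (hts : t ≤ s) (hts' : t ≤ 1 - s) :
    Real.binEntropy t ≤ Real.binEntropy s := by
  have ht : t ∈ Icc (0 : ℝ) 2⁻¹ := ⟨h0, by linarith⟩
  rcases le_total s 2⁻¹ with h | h
  · exact Real.binEntropy_strictMonoOn.monotoneOn ht ⟨by linarith, h⟩ hts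
  · rw [← Real.binEntropy_one_sub s]
    exact Real.binEntropy_strictMonoOn.monotoneOn ht ⟨by linarith, by linarith⟩ hts'

lemma shEnt_fibers_mem {X : Type*} [MeasurableSpace X] (ν : Measure X) [IsProbabilityMeasure ν]
    {C : Set X} (hC : MeasurableSet C) :
    shEnt ν (fibers (· ∈ C)) = ENNReal.ofReal (Real.binEntropy (ν.real C)) := by
  have htrue : fibers (· ∈ C) True = C := by ext x; simp [fibers]
  have hfalse : fibers (· ∈ C) False = Cᶜ := by ext x; simp [fibers]
  rw [shEnt, tsum_fintype, Fintype.univ_Prop, Finset.sum_pair true_ne_false, htrue, hfalse,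
    ← Measure.real, ← Measure.real, probReal_compl_eq_one_sub hC,
    ← ENNReal.ofReal_add (Real.negMulLog_nonneg measureReal_nonneg measureReal_le_one)
      (Real.negMulLog_nonneg (sub_nonneg.2 measureReal_le_one)
        (sub_le_self _ measureReal_nonneg)),
    Real.binEntropy_eq_negMulLog_add_negMulLog_one_sub]

lemma ofReal_binEntropy_le_shEnt [IsProbabilityMeasure ν] (ha : Measurable a) (i : ι) :
    ENNReal.ofReal (Real.binEntropy (ν.real (fibers a i))) ≤ shEnt ν (fibers a) := by
  rw [← shEnt_fibers_mem ν (measurableSet_fibers ha i)]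
  exact shEnt_fibers_comp_le ν ha (· = i)

end ShannonEntropy

section VanishingEntropy

variable {X ι : Type*} [MeasurableSpace X]

lemma tendsto_negMulLog_measureReal_fibers (ν : Measure X) [IsProbabilityMeasure ν]
    [MeasurableSpace ι] [MeasurableSingletonClass ι] {t : ℕ → X → ι} {k : ι}
    (ht : ∀ n, Measurable (t n))
    (hk : Tendsto (fun n => ν {x | t n x ≠ k}) atTop (𝓝 0)) (i : ι) :
    Tendsto (fun n => Real.negMulLog (ν.real (fibers (t n) i))) atTop (𝓝 0) := by
  have hreal : Tendsto (fun n => ν.real {x | t n x ≠ k}) atTop (𝓝 0) :=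
    (ENNReal.tendsto_toReal ENNReal.zero_ne_top).comp hk
  by_cases hik : i = k
  · subst hik
    have hone : Tendsto (fun n => ν.real (fibers (t n) i)) atTop (𝓝 1) := by
      have hcompl (n : ℕ) : ν.real (fibers (t n) i) = 1 - ν.real {x | t n x ≠ i} := by
        rw [← compl_compl (fibers (t n) i),
          probReal_compl_eq_one_sub (measurableSet_fibers (ht n) i).compl]
        rfl
      simpa [hcompl] using hreal.const_sub 1
    simpa [comp_def] using (Real.continuous_negMulLog.tendsto 1).comp hone
  · have hzero : Tendsto (fun n => ν.real (fibers (t n) i)) atTop (𝓝 0) :=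
      squeeze_zero (fun _ => measureReal_nonneg)
        (fun n => measureReal_mono fun x hx hxk => hik (Eq.trans (Eq.symm hx) hxk)) hreal
    simpa [comp_def] using (Real.continuous_negMulLog.tendsto 0).comp hzero

lemma tendsto_shEnt_fibers_zero (ν : Measure X) [IsProbabilityMeasure ν] [Countable ι]
    [MeasurableSpace ι] [MeasurableSingletonClass ι] {t : ℕ → X → ι} {k : ι}
    (ht : ∀ n, Measurable (t n))
    (hk : Tendsto (fun n => ν {x | t n x ≠ k}) atTop (𝓝 0))
    {b : ι → ℝ≥0∞} (hb : ∑' i, b i ≠ ⊤)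
    (hle : ∀ n i, ENNReal.ofReal (Real.negMulLog (ν.real (fibers (t n) i))) ≤ b i) :
    Tendsto (fun n => shEnt ν (fibers (t n))) atTop (𝓝 0) := by
  have hlim := tendsto_lintegral_of_dominated_convergence (μ := Measure.count) b
    (fun n => measurable_of_countable
      fun i => ENNReal.ofReal (Real.negMulLog (ν.real (fibers (t n) i))))
    (fun n => .of_forall (hle n)) (by rwa [lintegral_count])
    (.of_forall fun i =>
      ENNReal.tendsto_ofReal (tendsto_negMulLog_measureReal_fibers ν ht hk i))
  simp only [lintegral_count, ENNReal.ofReal_zero, tsum_zero] at hlim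
  exact hlim

lemma negMulLog_le_one {t : ℝ} (ht : 0 ≤ t) : Real.negMulLog t ≤ 1 := by
  have h := negMulLog_add_le ht zero_le_one (by simp)
  simp only [Real.log_one, neg_zero, mul_zero, zero_add] at h
  linarith

lemma tendsto_shEnt_fibers_zero_of_finite (ν : Measure X) [IsProbabilityMeasure ν] [Finite ι]
    [MeasurableSpace ι] [MeasurableSingletonClass ι] {t : ℕ → X → ι} {k : ι}
    (ht : ∀ n, Measurable (t n))
    (hk : Tendsto (fun n => ν {x | t n x ≠ k}) atTop (𝓝 0)) :
    Tendsto (fun n => shEnt ν (fibers (t n))) atTop (𝓝 0) := by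
  have := Fintype.ofFinite ι
  exact tendsto_shEnt_fibers_zero ν ht hk (b := 1) (by simp [tsum_fintype])
    fun n i => ENNReal.ofReal_le_one.2 (negMulLog_le_one measureReal_nonneg)

/-- The part of an `ℕ`-valued code beyond `N`; all values up to `N` are merged into `0`. -/
def tail (N i : ℕ) : ℕ := if N < i then i else 0

lemma tendsto_measure_lt (ν : Measure X) [IsFiniteMeasure ν] {p : X → ℕ} (hp : Measurable p) :
    Tendsto (fun N => ν {x | N < p x}) atTop (𝓝 0) := by
  have hempty : ⋂ N, {x | N < p x} = ∅ :=
    eq_empty_of_forall_notMem fun x hx => lt_irrefl (p x) (mem_iInter.1 hx (p x))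
  rw [← measure_empty (μ := ν), ← hempty]
  exact tendsto_measure_iInter_atTop
    (fun N => (hp measurableSet_Ioi).nullMeasurableSet)
    (fun N M h x (hx : M < p x) => h.trans_lt hx) ⟨0, measure_ne_top _ _⟩

lemma tendsto_shEnt_fibers_tail (ν : Measure X) [IsProbabilityMeasure ν] {p : X → ℕ}
    (hp : Measurable p) (hfin : shEnt ν (fibers p) ≠ ⊤) :
    Tendsto (fun N => shEnt ν (fibers (tail N ∘ p))) atTop (𝓝 0) := by
  have hsum : ∑' i, ((Pi.single 0 1 : ℕ → ℝ≥0∞) i +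
      ENNReal.ofReal (Real.negMulLog (ν.real (fibers p i)))) ≠ ⊤ := by
    rw [ENNReal.tsum_add, tsum_pi_single]
    exact ENNReal.add_ne_top.2 ⟨ENNReal.one_ne_top, hfin⟩
  refine tendsto_shEnt_fibers_zero ν (k := 0)
    (fun N => (measurable_of_countable (tail N)).comp hp) ?_ hsum fun N i => ?_
  · refine tendsto_of_tendsto_of_tendsto_of_le_of_le tendsto_const_nhds (tendsto_measure_lt ν hp)
      (fun _ => zero_le) fun N => measure_mono fun x hx => ?_
    by_contra hN
    exact hx (if_neg hN)
  · rcases eq_or_ne i 0 with rfl | hi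
    · refine le_add_right ?_
      rw [Pi.single_eq_same]
      exact ENNReal.ofReal_le_one.2 (negMulLog_le_one measureReal_nonneg)
    · have hsub : fibers (tail N ∘ p) i = if N < i then fibers p i else ∅ := by
        ext x
        by_cases h : N < p x <;> by_cases h' : N < i <;> simp [fibers, tail, h, h'] <;> omega
      rw [hsub]
      split_ifs <;> simp

end VanishingEntropy

section Disintegration

variable {X : Type*} {m : MeasurableSpace X} [mX : MeasurableSpace X] [StandardBorelSpace X]
  (μ : Measure X) [IsFiniteMeasure μ]

lemma lintegral_lintegral_condExpKernel (hm : m ≤ mX) {f : X → X → ℝ≥0∞}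
    (hf : Measurable[m.prod mX] (uncurry f)) :
    ∫⁻ x, ∫⁻ y, f x y ∂condExpKernel μ m x ∂μ = ∫⁻ x, f x x ∂μ := by
  have hdiag : @Measurable X (X × X) mX (m.prod mX) Function.diag :=
    Measurable.prodMk (measurable_id'' hm) measurable_id
  calc ∫⁻ x, ∫⁻ y, f x y ∂condExpKernel μ m x ∂μ
      = ∫⁻ x, ∫⁻ y, f x y ∂condExpKernel μ m x ∂μ.trim hm :=
        (lintegral_trim hm (hf.lintegral_kernel_prod_right' (κ := condExpKernel μ m))).symm
    _ = ∫⁻ z, uncurry f z ∂(μ.trim hm ⊗ₘ condExpKernel μ m) :=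
        (Measure.lintegral_compProd hf).symm
    _ = ∫⁻ x, f x x ∂μ := by
        rw [compProd_trim_condExpKernel hm, @lintegral_map _ _ _ (m.prod mX) _ _ _ hf hdiag]
        rfl

lemma setLIntegral_lintegral_condExpKernel (hm : m ≤ mX) {f : X → X → ℝ≥0∞}
    (hf : Measurable[m.prod mX] (uncurry f)) {W : Set X} (hW : MeasurableSet[m] W) :
    ∫⁻ x in W, ∫⁻ y, f x y ∂condExpKernel μ m x ∂μ = ∫⁻ x in W, f x x ∂μ := by
  rw [← lintegral_indicator (hm _ hW), ← lintegral_indicator (hm _ hW)]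
  have hWf : Measurable[m.prod mX] (uncurry fun x y => W.indicator (fun x => f x y) x) :=
    hf.indicator (s := {z : X × X | z.1 ∈ W}) (measurable_fst hW)
  calc ∫⁻ x, W.indicator (fun x => ∫⁻ y, f x y ∂condExpKernel μ m x) x ∂μ
      = ∫⁻ x, ∫⁻ y, W.indicator (fun x => f x y) x ∂condExpKernel μ m x ∂μ :=
        lintegral_congr fun x => by by_cases hx : x ∈ W <;> simp [hx]
    _ = ∫⁻ x, W.indicator (fun x => f x x) x ∂μ := lintegral_lintegral_condExpKernel μ hm hWf

lemma setLIntegral_condExpKernel_apply (hm : m ≤ mX) {A W : Set X} (hA : MeasurableSet A)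
    (hW : MeasurableSet[m] W) :
    ∫⁻ x in W, condExpKernel μ m x A ∂μ = μ (A ∩ W) := by
  have hf : Measurable[m.prod mX] (uncurry fun _ : X => A.indicator (1 : X → ℝ≥0∞)) :=
    (measurable_one.indicator hA).comp measurable_snd
  have h := setLIntegral_lintegral_condExpKernel μ hm hf hW
  simpa only [lintegral_indicator_one hA, Measure.restrict_apply hA] using h

lemma ae_condExpKernel_apply_eq_zero (hm : m ≤ mX) {A W : Set X} (hA : MeasurableSet A)
    (hW : MeasurableSet[m] W) (hAW : μ (A ∩ W) = 0) :
    ∀ᵐ x ∂μ, x ∈ W → condExpKernel μ m x A = 0 := by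
  rw [← setLIntegral_condExpKernel_apply μ hm hA hW,
    lintegral_eq_zero_iff ((measurable_condExpKernel hA).mono hm le_rfl)] at hAW
  exact (ae_restrict_iff' (hm _ hW)).1 hAW

end Disintegration

section ConditionalEntropy

variable {X ι κ : Type*} {m m₁ m₂ : MeasurableSpace X} [mX : MeasurableSpace X]

lemma condEnt_bot (μ : Measure X) [IsProbabilityMeasure μ] {α : ι → Set X}
    (hα : ∀ i, MeasurableSet (α i)) : condEnt ⊥ μ α = shEnt μ α := by
  have hα' (i : ι) : ∫ x, (α i).indicator (fun _ => (1 : ℝ)) x ∂μ = (μ (α i)).toReal :=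
    integral_indicator_one (hα i)
  simp [condEnt, shEnt, condExp_bot, hα']

lemma integrable_indicator_const_one (μ : Measure X) [IsFiniteMeasure μ] {A : Set X}
    (hA : MeasurableSet A) : Integrable (A.indicator fun _ => (1 : ℝ)) μ :=
  (integrable_const 1).indicator hA

lemma condExp_indicator_mem_Icc (hm : m ≤ mX) (μ : Measure X) [IsFiniteMeasure μ]
    {A : Set X} (hA : MeasurableSet A) :
    ∀ᵐ x ∂μ, (μ[A.indicator (fun _ => (1 : ℝ)) | m]) x ∈ Icc (0 : ℝ) 1 := by
  have hle := condExp_mono (m := m) (integrable_indicator_const_one μ hA) (integrable_const 1)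
    (.of_forall fun x => indicator_le_self' (fun _ _ => zero_le_one) x)
  have hnonneg : 0 ≤ᵐ[μ] μ[A.indicator (fun _ => (1 : ℝ)) | m] :=
    condExp_nonneg (.of_forall fun x => indicator_nonneg (fun _ _ => zero_le_one) x)
  rw [condExp_const hm] at hle
  filter_upwards [hnonneg, hle] with x h0 h1 using ⟨h0, h1⟩

lemma integrable_negMulLog_condExp (hm : m ≤ mX) (μ : Measure X)
    [IsFiniteMeasure μ] {A : Set X} (hA : MeasurableSet A) :
    Integrable (fun x => Real.negMulLog ((μ[A.indicator (fun _ => (1 : ℝ)) | m]) x)) μ := by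
  refine Integrable.of_bound (Real.continuous_negMulLog.comp_aestronglyMeasurable
    (stronglyMeasurable_condExp.mono hm).aestronglyMeasurable) 1 ?_
  filter_upwards [condExp_indicator_mem_Icc hm μ hA] with x hx
  rw [Real.norm_of_nonneg (Real.negMulLog_nonneg hx.1 hx.2)]
  exact negMulLog_le_one hx.1

lemma lintegral_negMulLog_condExp (hm : m ≤ mX) (μ : Measure X) [IsFiniteMeasure μ]
    {A : Set X} (hA : MeasurableSet A) :
    ∫⁻ x, ENNReal.ofReal (Real.negMulLog ((μ[A.indicator (fun _ => (1 : ℝ)) | m]) x)) ∂μ =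
      ENNReal.ofReal (∫ x, Real.negMulLog ((μ[A.indicator (fun _ => (1 : ℝ)) | m]) x) ∂μ) := by
  refine (ofReal_integral_eq_lintegral_ofReal (integrable_negMulLog_condExp hm μ hA) ?_).symm
  filter_upwards [condExp_indicator_mem_Icc hm μ hA] with x hx
    using Real.negMulLog_nonneg hx.1 hx.2

lemma condEnt_eq_tsum [Countable ι] (hm : m ≤ mX) (μ : Measure X) [IsFiniteMeasure μ]
    {α : ι → Set X} (hα : ∀ i, MeasurableSet (α i)) :
    condEnt m μ α = ∑' i, ENNReal.ofReal
      (∫ x, Real.negMulLog ((μ[(α i).indicator (fun _ => (1 : ℝ)) | m]) x) ∂μ) := by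
  rw [condEnt, lintegral_tsum fun i =>
    (integrable_negMulLog_condExp hm μ (hα i)).aestronglyMeasurable.aemeasurable.ennreal_ofReal]
  exact tsum_congr fun i => lintegral_negMulLog_condExp hm μ (hα i)

lemma condEnt_anti [Countable ι] (μ : Measure X) [IsFiniteMeasure μ]
    (h₁₂ : m₁ ≤ m₂) (hm₂ : m₂ ≤ mX) {α : ι → Set X} (hα : ∀ i, MeasurableSet (α i)) :
    condEnt m₂ μ α ≤ condEnt m₁ μ α := by
  have hm₁ := h₁₂.trans hm₂
  rw [condEnt_eq_tsum hm₂ μ hα, condEnt_eq_tsum hm₁ μ hα]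
  refine ENNReal.tsum_le_tsum fun i => ENNReal.ofReal_le_ofReal ?_
  rw [← integral_condExp hm₁ (μ := μ)]
  refine integral_mono_ae integrable_condExp (integrable_negMulLog_condExp hm₁ μ (hα i)) ?_
  filter_upwards [Real.concaveOn_negMulLog.condExp_map_le hm₁
      (Real.continuous_negMulLog.upperSemicontinuous.upperSemicontinuousOn _)
      ((condExp_indicator_mem_Icc hm₂ μ (hα i)).mono fun x hx => hx.1) isClosed_Ici
      integrable_condExp (integrable_negMulLog_condExp hm₂ μ (hα i)),
    condExp_condExp_of_le (f := (α i).indicator fun _ => (1 : ℝ)) h₁₂ hm₂] with x hJensen htower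
  exact hJensen.trans_eq (congrArg Real.negMulLog htower)

lemma condEnt_le_shEnt [Countable ι] (hm : m ≤ mX) (μ : Measure X)
    [IsProbabilityMeasure μ] {α : ι → Set X} (hα : ∀ i, MeasurableSet (α i)) :
    condEnt m μ α ≤ shEnt μ α :=
  (condEnt_anti μ bot_le hm hα).trans_eq (condEnt_bot μ hα)

end ConditionalEntropy

section LocalEntropy

/-- The entropy of the code `a` under the conditional measure of `μ` given `m` at `x`; its
integral is the conditional entropy. -/
noncomputable def localEnt {X ι : Type*} (m : MeasurableSpace X) [MeasurableSpace X]
    [StandardBorelSpace X] (μ : Measure X) [IsFiniteMeasure μ] (a : X → ι) (x : X) : ℝ≥0∞ :=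
  shEnt (condExpKernel μ m x) (fibers a)

variable {X ι κ : Type*} {m : MeasurableSpace X} [mX : MeasurableSpace X]
  [StandardBorelSpace X] {a a' : X → ι}

lemma localEnt_congr_on (hm : m ≤ mX) (μ : Measure X) [IsFiniteMeasure μ] {W : Set X}
    (hW : MeasurableSet[m] W) (hab : EqOn a a' W) :
    ∀ᵐ x ∂μ, x ∈ W → localEnt m μ a x = localEnt m μ a' x := by
  filter_upwards [ae_condExpKernel_apply_eq_zero μ hm (hm _ hW).compl hW (by simp)] with x hx hxW
  refine tsum_congr fun i => ?_
  congr 3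
  refine measure_congr ?_
  filter_upwards [compl_mem_ae_iff.2 (hx hxW)] with y hy
  exact congrArg (· = i) (hab (not_not.1 hy))

variable [MeasurableSpace ι] [MeasurableSingletonClass ι] [Countable ι]

lemma measurable_localEnt (μ : Measure X) [IsFiniteMeasure μ] (ha : Measurable a) :
    Measurable[m] (localEnt m μ a) := by
  have hcell (i : ι) : Measurable[m] fun x =>
      ENNReal.ofReal (Real.negMulLog ((condExpKernel μ m x).real (fibers a i))) :=
    (Real.continuous_negMulLog.measurable.comp
      (measurable_condExpKernel (measurableSet_fibers ha i)).ennreal_toReal).ennreal_ofReal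
  exact @Measurable.tsum X ℝ≥0∞ ι m _ _ _ _ _ _ _ _ _ _ _ _ hcell

lemma condEnt_fibers_eq_lintegral (hm : m ≤ mX) (μ : Measure X) [IsFiniteMeasure μ]
    (ha : Measurable a) : condEnt m μ (fibers a) = ∫⁻ x, localEnt m μ a x ∂μ := by
  have hcell : ∀ᵐ x ∂μ, ∀ i, (condExpKernel μ m x).real (fibers a i)
      = (μ[(fibers a i).indicator (fun _ => (1 : ℝ)) | m]) x :=
    ae_all_iff.2 fun i => condExpKernel_ae_eq_condExp hm (measurableSet_fibers ha i)
  refine lintegral_congr_ae ?_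
  filter_upwards [hcell] with x hx
  exact tsum_congr fun i => by rw [← hx i]; rfl

variable [MeasurableSpace κ] [MeasurableSingletonClass κ] [Countable κ] {b : X → κ}

lemma condEnt_fibers_comp_le (hm : m ≤ mX) (μ : Measure X) [IsFiniteMeasure μ]
    (ha : Measurable a) (f : ι → κ) :
    condEnt m μ (fibers (f ∘ a)) ≤ condEnt m μ (fibers a) := by
  rw [condEnt_fibers_eq_lintegral hm μ ha,
    condEnt_fibers_eq_lintegral hm μ ((measurable_of_countable f).comp ha)]
  exact lintegral_mono fun x => shEnt_fibers_comp_le _ ha f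

lemma condEnt_fibers_prodMk_le (hm : m ≤ mX) (μ : Measure X) [IsFiniteMeasure μ]
    (ha : Measurable a) (hb : Measurable b) :
    condEnt m μ (fibers fun x => (a x, b x)) ≤
      condEnt m μ (fibers a) + condEnt m μ (fibers b) := by
  rw [condEnt_fibers_eq_lintegral hm μ ha, condEnt_fibers_eq_lintegral hm μ hb,
    condEnt_fibers_eq_lintegral hm μ (ha.prodMk hb),
    ← lintegral_add_left ((measurable_localEnt μ ha).mono hm le_rfl)]
  exact lintegral_mono fun x => shEnt_fibers_prodMk_le _ ha hb

lemma tendsto_condEnt_fibers_tail (hm : m ≤ mX) (μ : Measure X) [IsFiniteMeasure μ] {p : X → ℕ}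
    (hp : Measurable p) (hfin : condEnt m μ (fibers p) ≠ ⊤) :
    Tendsto (fun N => condEnt m μ (fibers (tail N ∘ p))) atTop (𝓝 0) := by
  have htail (N : ℕ) : Measurable (tail N ∘ p) := (measurable_of_countable _).comp hp
  rw [condEnt_fibers_eq_lintegral hm μ hp] at hfin
  simp only [fun N => condEnt_fibers_eq_lintegral hm μ (htail N)]
  have hlt := ae_lt_top ((measurable_localEnt μ hp).mono hm le_rfl) hfin
  simpa using tendsto_lintegral_of_dominated_convergence (localEnt m μ p)
    (fun N => (measurable_localEnt μ (htail N)).mono hm le_rfl)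
    (fun N => .of_forall fun x => shEnt_fibers_comp_le _ hp (tail N)) hfin
    (hlt.mono fun x hx => tendsto_shEnt_fibers_tail _ hp hx.ne)

end LocalEntropy

section InvariantAlgebras

variable {G X : Type*} [Group G] [MulAction G X]

lemma invariantAlg_iff_comap_le {F : MeasurableSpace X} :
    InvariantAlg G F ↔ ∀ g : G, F.comap (fun x => g • x) ≤ F :=
  ⟨fun h g _ ⟨A, hA, hAB⟩ => hAB ▸ h g A hA, fun h g A hA => h g _ ⟨A, hA, rfl⟩⟩

lemma InvariantAlg.measurable_smul {F : MeasurableSpace X} (hF : InvariantAlg G F) (g : G) :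
    Measurable[F, F] fun x : X => g • x := fun A hA => hF g A hA

lemma InvariantAlg.sup {F F' : MeasurableSpace X} (hF : InvariantAlg G F)
    (hF' : InvariantAlg G F') : InvariantAlg G (F ⊔ F') := by
  rw [invariantAlg_iff_comap_le] at *
  intro g
  rw [MeasurableSpace.comap_sup]
  exact sup_le_sup (hF g) (hF' g)

lemma invariantAlg_generateFrom {S : Set (Set X)}
    (hS : ∀ g : G, ∀ A ∈ S, (fun x => g • x) ⁻¹' A ∈ S) :
    InvariantAlg G (MeasurableSpace.generateFrom S) :=
  fun g _ hA => @measurable_generateFrom _ _ (.generateFrom S) S _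
    (fun B hB => MeasurableSpace.measurableSet_generateFrom (hS g B hB)) _ hA

lemma invariantAlg_sigmaG (ξ : Set (Set X)) : InvariantAlg G (sigmaG G ξ) := by
  refine invariantAlg_generateFrom ?_
  rintro g _ ⟨h, A, hA, rfl⟩
  exact ⟨h * g, A, hA, by simp only [mul_smul]; rfl⟩

lemma measurableSet_sigmaG {ξ : Set (Set X)} {A : Set X} (hA : A ∈ ξ) :
    MeasurableSet[sigmaG G ξ] A :=
  MeasurableSpace.measurableSet_generateFrom ⟨1, A, hA, by simp⟩

variable [mX : MeasurableSpace X]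

lemma measurableSet_invSigma_iff {A : Set X} :
    MeasurableSet[invSigma G X] A ↔
      MeasurableSet A ∧ ∀ g : G, (fun x => g • x) ⁻¹' A = A := by
  refine ⟨fun hA => ?_, fun hA => MeasurableSpace.measurableSet_generateFrom hA⟩
  induction A, hA using MeasurableSpace.generateFrom_induction with
  | hC _ hA => exact hA
  | empty => exact ⟨.empty, fun _ => rfl⟩
  | compl _ _ ih => exact ⟨ih.1.compl, fun g => by rw [preimage_compl, ih.2 g]⟩
  | iUnion A _ ih =>
    exact ⟨.iUnion fun n => (ih n).1, fun g => by
      rw [preimage_iUnion]; exact iUnion_congr fun n => (ih n).2 g⟩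

lemma invSigma_le : invSigma G X ≤ mX := fun _ hA => (measurableSet_invSigma_iff.1 hA).1

lemma invariantAlg_invSigma : InvariantAlg G (invSigma G X) := fun g A hA => by
  rwa [(measurableSet_invSigma_iff.1 hA).2 g]

end InvariantAlgebras

section MassTransport

variable {G X : Type*} [Group G] [MulAction G X]

/-- The union of the orbits meeting `S`. -/
def saturation (G : Type*) {X : Type*} [Group G] [MulAction G X] (S : Set X) : Set X :=
  {x | ∃ g : G, g • x ∈ S}

/-- `C` meets every orbit in at most one point. -/
def IsPartialTransversal (G : Type*) {X : Type*} [Group G] [MulAction G X] (C : Set X) : Prop :=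
  ∀ x ∈ C, ∀ g : G, g • x ∈ C → g • x = x

/-- The points whose first visit to `C`, along the enumeration `g` of group elements, happens at
time `n`. -/
def returnCell (g : ℕ → G) (C : Set X) (n : ℕ) : Set X :=
  disjointed (fun k => (fun x => g k • x) ⁻¹' C) n

lemma smul_mem_saturation {S : Set X} {g : G} {x : X} :
    g • x ∈ saturation G S ↔ x ∈ saturation G S := by
  refine ⟨fun ⟨h, hx⟩ => ⟨h * g, by rwa [mul_smul]⟩, fun ⟨h, hx⟩ => ⟨h * g⁻¹, ?_⟩⟩
  rwa [mul_smul, inv_smul_smul]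

lemma subset_saturation (S : Set X) : S ⊆ saturation G S := fun x hx => ⟨1, by rwa [one_smul]⟩

lemma smul_mem_of_mem_returnCell {g : ℕ → G} {C : Set X} {n : ℕ} {x : X}
    (hx : x ∈ returnCell g C n) : g n • x ∈ C := disjointed_subset _ n hx

lemma pairwise_disjoint_returnCell (g : ℕ → G) (C : Set X) :
    Pairwise (onFun Disjoint (returnCell g C)) := disjoint_disjointed _

lemma iUnion_returnCell {g : ℕ → G} (hg : Surjective g) (C : Set X) :
    ⋃ n, returnCell g C n = saturation G C := by
  refine iUnion_disjointed.trans (Set.ext fun x => ?_)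
  simp only [mem_iUnion, mem_preimage, saturation, mem_ofPred_eq, hg.exists]

variable [mX : MeasurableSpace X] [MeasurableConstSMul G X]

lemma measurableSet_returnCell (g : ℕ → G) {C : Set X} (hC : MeasurableSet C) (n : ℕ) :
    MeasurableSet (returnCell g C n) :=
  .disjointed (fun k => measurable_const_smul (g k) hC) n

variable [Countable G]

lemma measurableSet_invSigma_saturation {S : Set X} (hS : MeasurableSet S) :
    MeasurableSet[invSigma G X] (saturation G S) := by
  obtain ⟨g, hg⟩ := exists_surjective_nat G
  refine measurableSet_invSigma_iff.2 ⟨?_, fun h => Set.ext fun x => smul_mem_saturation⟩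
  rw [← iUnion_returnCell hg]
  exact .iUnion (measurableSet_returnCell g hS)

/-- Each point of `S` is moved, along its own orbit, to its first visit to `T`. -/
lemma measure_le_of_subset_saturation (μ : Measure X) [SMulInvariantMeasure G X μ] {S T : Set X}
    (hS : MeasurableSet S) (hT : MeasurableSet T) (hone : IsPartialTransversal G S)
    (hST : S ⊆ saturation G T) : μ S ≤ μ T := by
  obtain ⟨g, hg⟩ := exists_surjective_nat G
  have hE (n : ℕ) : MeasurableSet (S ∩ returnCell g T n) :=
    hS.inter (measurableSet_returnCell g hT n)
  have hdisj : Pairwise (onFun Disjoint fun n => S ∩ returnCell g T n) := fun i j hij =>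
    (pairwise_disjoint_returnCell g T hij).mono inter_subset_right inter_subset_right
  have hinj : Pairwise (onFun Disjoint
      fun n => (fun x => (g n)⁻¹ • x) ⁻¹' (S ∩ returnCell g T n)) := by
    refine fun i j hij => Set.disjoint_left.2 fun x hxi hxj => ?_
    have hji : (g j)⁻¹ • x = (g i)⁻¹ • x := by
      simpa [mul_smul] using hone _ hxi.1 ((g j)⁻¹ * g i) (by simpa [mul_smul] using hxj.1)
    exact Set.disjoint_left.1 (pairwise_disjoint_returnCell g T hij) hxi.2
      (by simpa only [mem_preimage, hji] using hxj.2)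
  calc μ S = μ (⋃ n, S ∩ returnCell g T n) := by
        rw [← inter_iUnion, iUnion_returnCell hg, inter_eq_left.2 hST]
    _ = ∑' n, μ ((fun x => (g n)⁻¹ • x) ⁻¹' (S ∩ returnCell g T n)) := by
        simp only [measure_iUnion hdisj hE, measure_preimage_smul]
    _ = μ (⋃ n, (fun x => (g n)⁻¹ • x) ⁻¹' (S ∩ returnCell g T n)) :=
        (measure_iUnion hinj fun n => measurable_const_smul _ (hE n)).symm
    _ ≤ μ T := measure_mono (iUnion_subset fun n x hx => by
        simpa using smul_mem_of_mem_returnCell hx.2)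

end MassTransport

section TransversalEntropy

variable {G X : Type*} {m : MeasurableSpace X} [Group G] [MulAction G X] [Countable G]
  [mX : MeasurableSpace X] [StandardBorelSpace X] [MeasurableConstSMul G X]
  (μ : Measure X) [IsProbabilityMeasure μ] [SMulInvariantMeasure G X μ]

/-- If `κ(A) < κ(C)` on a set of positive measure, mass transport from `C` to `A` inside that set
is violated. -/
lemma ae_condExpKernel_transversal_le (hm : m ≤ mX) (hI : invSigma G X ≤ m) {C A : Set X}
    (hC : MeasurableSet C) (hA : MeasurableSet A) (hone : IsPartialTransversal G C) :
    ∀ᵐ x ∂μ, condExpKernel μ m x A ≠ 0 → condExpKernel μ m x C ≤ condExpKernel μ m x A := by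
  have hB : MeasurableSet[m] {x | condExpKernel μ m x A < condExpKernel μ m x C} :=
    measurableSet_lt (measurable_condExpKernel hA) (measurable_condExpKernel hC)
  set B : Set X := {x | condExpKernel μ m x A < condExpKernel μ m x C}
  have hBW : MeasurableSet[m] (B ∩ saturation G (A ∩ B)) :=
    MeasurableSet.inter hB (hI _ (measurableSet_invSigma_saturation (hA.inter (hm _ hB))))
  set W : Set X := B ∩ saturation G (A ∩ B)
  have htransport : μ (C ∩ W) ≤ μ (A ∩ W) := by
    refine measure_le_of_subset_saturation (G := G) μ (hC.inter (hm _ hBW)) (hA.inter (hm _ hBW))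
      (fun x hx g hg => hone x hx.1 g hg.1) ?_
    rintro x ⟨-, -, g, hgA, hgB⟩
    exact ⟨g, hgA, hgB, smul_mem_saturation.2 ⟨g, hgA, hgB⟩⟩
  have hnull : μ W = 0 := by
    by_contra hne
    rw [← setLIntegral_condExpKernel_apply μ hm hC hBW,
      ← setLIntegral_condExpKernel_apply μ hm hA hBW] at htransport
    refine htransport.not_gt (setLIntegral_strict_mono (hm _ hBW) hne
      ((measurable_condExpKernel hC).mono hm le_rfl) ?_ (.of_forall fun x hx => hx.1))
    rw [setLIntegral_condExpKernel_apply μ hm hA hBW]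
    exact measure_ne_top _ _
  have hAB : μ (A ∩ B) = 0 :=
    measure_mono_null (fun x hx => (⟨hx.2, subset_saturation _ hx⟩ : x ∈ W)) hnull
  filter_upwards [ae_condExpKernel_apply_eq_zero μ hm hA hB hAB] with x hx hne
  exact not_lt.1 fun hlt => hne (hx hlt)

lemma ae_localEnt_transversal_le (hm : m ≤ mX) (hI : invSigma G X ≤ m) {ι : Type*} [Countable ι]
    [MeasurableSpace ι] [MeasurableSingletonClass ι] {a : X → ι} (ha : Measurable a) {C : Set X}
    (hC : MeasurableSet C) (hone : IsPartialTransversal G C)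
    (hCa : ∀ x ∈ C, localEnt m μ a x ≠ 0) :
    ∀ᵐ x ∂μ, localEnt m μ (· ∈ C) x ≤ localEnt m μ a x := by
  have hsupp : ∀ᵐ x ∂μ, localEnt m μ a x = 0 → condExpKernel μ m x C = 0 := by
    refine ae_condExpKernel_apply_eq_zero μ hm hC
      (measurable_localEnt μ ha (measurableSet_singleton 0)) ?_
    rw [disjoint_iff_inter_eq_empty.1 (Set.disjoint_left.2 hCa), measure_empty]
  have hle : ∀ᵐ x ∂μ, ∀ i, condExpKernel μ m x (fibers a i) ≠ 0 →
      condExpKernel μ m x C ≤ condExpKernel μ m x (fibers a i) :=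
    ae_all_iff.2 fun i =>
      ae_condExpKernel_transversal_le μ hm hI hC (measurableSet_fibers ha i) hone
  have hle' : ∀ᵐ x ∂μ, ∀ i, condExpKernel μ m x (fibers a i)ᶜ ≠ 0 →
      condExpKernel μ m x C ≤ condExpKernel μ m x (fibers a i)ᶜ :=
    ae_all_iff.2 fun i =>
      ae_condExpKernel_transversal_le μ hm hI hC (measurableSet_fibers ha i).compl hone
  filter_upwards [hsupp, hle, hle'] with x hsupp hle hle'
  set ν := condExpKernel μ m x
  rw [localEnt, shEnt_fibers_mem _ hC]
  by_cases h0 : localEnt m μ a x = 0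
  · simp [Measure.real, ν, hsupp h0]
  obtain ⟨i, hi⟩ : ∃ i, Real.negMulLog (ν.real (fibers a i)) ≠ 0 := by
    by_contra! hall
    exact h0 (ENNReal.tsum_eq_zero.2 fun i => by
      rw [← Measure.real, hall i, ENNReal.ofReal_zero])
  have hi0 : ν (fibers a i) ≠ 0 := fun h => hi (by simp [Measure.real, h])
  have hi1 : ν (fibers a i)ᶜ ≠ 0 := fun h =>
    hi (by simp [Measure.real, (prob_compl_eq_zero_iff (measurableSet_fibers ha i)).1 h])
  have hcompl : ν.real C ≤ 1 - ν.real (fibers a i) := by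
    rw [← probReal_compl_eq_one_sub (measurableSet_fibers ha i)]
    exact ENNReal.toReal_mono (measure_ne_top _ _) (hle' i hi1)
  calc ENNReal.ofReal (Real.binEntropy (ν.real C))
      ≤ ENNReal.ofReal (Real.binEntropy (ν.real (fibers a i))) :=
        ENNReal.ofReal_le_ofReal (binEntropy_le_binEntropy measureReal_nonneg
          (ENNReal.toReal_mono (measure_ne_top _ _) (hle i hi0)) hcompl)
    _ ≤ localEnt m μ a x := ofReal_binEntropy_le_shEnt ν ha i

end TransversalEntropy

section Markers

variable {G X : Type*} [Group G] [MulAction G X]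

open scoped Classical in
/-- The infimum of `f` over the points of `N` in the orbit of `x`. -/
noncomputable def orbitInf (G : Type*) {X : Type*} [Group G] [MulAction G X] (f : X → ℝ≥0∞)
    (N : Set X) (x : X) : ℝ≥0∞ :=
  ⨅ g : G, if g • x ∈ N then f (g • x) else ⊤

/-- The points of `N` where `f` exceeds its orbit infimum by less than `1 / (n + 1)`, but does not
attain it. -/
def nearInf (G : Type*) {X : Type*} [Group G] [MulAction G X] (f : X → ℝ≥0∞) (N : Set X)
    (n : ℕ) : Set X :=
  {x ∈ N | orbitInf G f N x < f x ∧ f x < orbitInf G f N x + (n + 1 : ℝ≥0∞)⁻¹}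

variable {f : X → ℝ≥0∞} {N : Set X}

lemma orbitInf_smul (g : G) (x : X) : orbitInf G f N (g • x) = orbitInf G f N x :=
  (Equiv.mulRight g).iInf_congr fun h => by
    rw [Equiv.coe_mulRight, mul_smul]

lemma orbitInf_le {g : G} {x : X} (hx : g • x ∈ N) : orbitInf G f N x ≤ f (g • x) :=
  iInf_le_of_le g (by rw [if_pos hx])

lemma exists_lt_of_orbitInf_lt {x : X} {c : ℝ≥0∞} (hc : orbitInf G f N x < c) :
    ∃ g : G, g • x ∈ N ∧ f (g • x) < c := by
  obtain ⟨g, hg⟩ := iInf_lt_iff.1 hc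
  by_cases hgN : g • x ∈ N
  · exact ⟨g, hgN, by rwa [if_pos hgN] at hg⟩
  · rw [if_neg hgN] at hg
    exact absurd hg not_top_lt

lemma isPartialTransversal_minimizers (hf : Injective f) :
    IsPartialTransversal G {x ∈ N | f x = orbitInf G f N x} := fun x hx g hg =>
  hf (by rw [hg.2, hx.2, orbitInf_smul])

lemma saturation_diff_subset_saturation_nearInf (hf : ∀ x, f x ≠ ⊤) (n : ℕ) :
    saturation G N \ saturation G {x ∈ N | f x = orbitInf G f N x} ⊆
      saturation G (nearInf G f N n) := by
  rintro x ⟨⟨h, hh⟩, hx⟩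
  have hfin : orbitInf G f N x ≠ ⊤ := ((orbitInf_le hh).trans_lt (hf _).lt_top).ne
  obtain ⟨g, hgN, hg⟩ := exists_lt_of_orbitInf_lt
    (ENNReal.lt_add_right hfin (ENNReal.inv_ne_zero.2 (by finiteness : (n + 1 : ℝ≥0∞) ≠ ⊤)))
  refine ⟨g, hgN, ?_, by rwa [orbitInf_smul]⟩
  rw [orbitInf_smul]
  exact (orbitInf_le hgN).lt_of_ne fun heq => hx ⟨g, hgN, by rw [orbitInf_smul, heq]⟩

lemma antitone_nearInf : Antitone (nearInf G f N) := fun n k hnk x hx =>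
  ⟨hx.1, hx.2.1, hx.2.2.trans_le (by gcongr)⟩

lemma iInter_nearInf : ⋂ n, nearInf G f N n = ∅ := by
  refine eq_empty_of_forall_notMem fun x hx => ?_
  rw [mem_iInter] at hx
  have hlt := (hx 0).2.1
  obtain ⟨n, hn⟩ := ENNReal.exists_inv_nat_lt (tsub_pos_of_lt hlt).ne'
  refine (hx n).2.2.not_ge ?_
  calc orbitInf G f N x + (n + 1 : ℝ≥0∞)⁻¹
      ≤ orbitInf G f N x + (f x - orbitInf G f N x) := by
        gcongr
        exact (ENNReal.inv_le_inv.2 le_self_add).trans hn.le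
    _ = f x := add_tsub_cancel_of_le hlt.le

variable [mX : MeasurableSpace X] [MeasurableConstSMul G X] [Countable G]

lemma measurable_orbitInf (hf : Measurable f) (hN : MeasurableSet N) :
    Measurable (orbitInf G f N) :=
  .iInf fun g => .ite (measurable_const_smul g hN) (hf.comp (measurable_const_smul g))
    measurable_const

lemma measurableSet_nearInf (hf : Measurable f) (hN : MeasurableSet N) (n : ℕ) :
    MeasurableSet (nearInf G f N n) :=
  hN.inter ((measurableSet_lt (measurable_orbitInf hf hN) hf).inter
    (measurableSet_lt hf ((measurable_orbitInf hf hN).add_const _)))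

lemma tendsto_measure_nearInf (μ : Measure X) [IsFiniteMeasure μ] (hf : Measurable f)
    (hN : MeasurableSet N) : Tendsto (fun n => μ (nearInf G f N n)) atTop (𝓝 0) := by
  rw [← measure_empty (μ := μ), ← iInter_nearInf (G := G) (f := f) (N := N)]
  exact tendsto_measure_iInter_atTop
    (fun n => (measurableSet_nearInf hf hN n).nullMeasurableSet) antitone_nearInf
    ⟨0, measure_ne_top _ _⟩

lemma exists_measurable_injective_ennreal (X : Type*) [MeasurableSpace X]
    [StandardBorelSpace X] : ∃ f : X → ℝ≥0∞, Measurable f ∧ Injective f ∧ ∀ x, f x ≠ ⊤ := by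
  have hemb := measurableEmbedding_embeddingReal X
  refine ⟨fun x => ENNReal.ofReal (Real.exp (embeddingReal X x)),
    (Real.measurable_exp.comp hemb.measurable).ennreal_ofReal, fun x y hxy => ?_,
    fun x => ENNReal.ofReal_ne_top⟩
  exact hemb.injective (Real.exp_injective
    ((ENNReal.ofReal_eq_ofReal_iff (Real.exp_pos _).le (Real.exp_pos _).le).1 hxy))

/-- Order `N` by an injective `f`: either `f` attains its minimum on an orbit, and `C` picks that
point, or the points where `f` is nearly minimal serve as markers. -/
lemma exists_partialTransversal_and_markers (μ : Measure X) [IsFiniteMeasure μ]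
    [StandardBorelSpace X] (hN : MeasurableSet N) :
    ∃ (C : Set X) (D : ℕ → Set X), MeasurableSet C ∧ (∀ n, MeasurableSet (D n)) ∧ C ⊆ N ∧
      IsPartialTransversal G C ∧ (∀ n, saturation G N \ saturation G C ⊆ saturation G (D n)) ∧
      Tendsto (fun n => μ (D n)) atTop (𝓝 0) := by
  obtain ⟨f, hf, hinj, hfin⟩ := exists_measurable_injective_ennreal X
  exact ⟨{x ∈ N | f x = orbitInf G f N x}, nearInf G f N,
    hN.inter (measurableSet_eq_fun hf (measurable_orbitInf hf hN)), measurableSet_nearInf hf hN,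
    sep_subset _ _, isPartialTransversal_minimizers hinj,
    saturation_diff_subset_saturation_nearInf hfin, tendsto_measure_nearInf μ hf hN⟩

end Markers

section ListEntropy

variable {A : Type*}

/-- Lists carry the discrete σ-algebra, so that a list-valued code is a countable partition. -/
instance listMeasurableSpace : MeasurableSpace (List A) := ⊤

instance listDiscreteMeasurableSpace : DiscreteMeasurableSpace (List A) :=
  ⟨fun _ => trivial⟩

lemma tsum_list_prod [Fintype A] {κ : A → ℝ} (hκ : ∀ a, 0 ≤ κ a) :
    ∑' l : List A, ENNReal.ofReal (l.map κ).prod = (1 - ENNReal.ofReal (∑ a, κ a))⁻¹ := by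
  have hlength (n : ℕ) : ∑' v : Fin n → A, ENNReal.ofReal ((List.ofFn v).map κ).prod =
      ENNReal.ofReal (∑ a, κ a) ^ n := by
    rw [tsum_fintype, ENNReal.ofReal_sum_of_nonneg fun a _ => hκ a, ← Fin.prod_const n,
      Finset.prod_univ_sum, Fintype.piFinset_univ]
    refine Finset.sum_congr rfl fun v _ => ?_
    rw [← ENNReal.ofReal_prod_of_nonneg fun i _ => hκ (v i), List.map_ofFn, List.prod_ofFn]
    rfl
  rw [← (List.equivSigmaTuple (α := A)).symm.tsum_eq, ENNReal.tsum_sigma',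
    ← ENNReal.tsum_geometric]
  exact tsum_congr hlength

lemma surprisal_list_prod_le {κ : A → ℝ} (hκ : ∀ a, 0 < κ a) (l : List A) :
    surprisal (l.map κ).prod ≤ (l.map fun a => surprisal (κ a)).sum := by
  induction l with
  | nil => simp [surprisal_one]
  | cons a l ih =>
    have hl : 0 < (l.map κ).prod := List.prod_pos (by simp [hκ])
    simp only [List.map_cons, List.prod_cons, List.sum_cons]
    exact (surprisal_mul_le (hκ a).ne' hl.ne').trans (by gcongr)

/-- Subprobability weights on lists, for `κ` of total mass at most `s`: the empty list has weight
`1 - η`, so that a code which is rarely nonempty is cheap. -/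
noncomputable def listWeight (κ : A → ℝ) (s η : ℝ) : List A → ℝ
  | [] => 1 - η
  | a :: l => η * (1 - s) * ((a :: l).map κ).prod

variable {κ : A → ℝ} {s η : ℝ}

lemma listWeight_pos (hκ : ∀ a, 0 < κ a) (hs : s < 1) (hη : 0 < η) (hη1 : η < 1) (l : List A) :
    0 < listWeight κ s η l := by
  rcases l with - | ⟨a, l⟩
  · exact sub_pos.2 hη1
  · exact mul_pos (mul_pos hη (sub_pos.2 hs)) (List.prod_pos (by simp [hκ]))

lemma tsum_listWeight_le [Fintype A] (hκ : ∀ a, 0 ≤ κ a) (hsum : ∑ a, κ a ≤ s) (hs : s < 1)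
    (hη : 0 ≤ η) (hη1 : η ≤ 1) : ∑' l, ENNReal.ofReal (listWeight κ s η l) ≤ 1 := by
  classical
  have hs0 : 0 ≤ s := (Finset.sum_nonneg fun a _ => hκ a).trans hsum
  have hs1 : 0 < 1 - s := sub_pos.2 hs
  have hgap : ENNReal.ofReal (1 - s) ≤ 1 - ENNReal.ofReal (∑ a, κ a) := by
    rw [ENNReal.ofReal_sub _ hs0, ENNReal.ofReal_one]
    gcongr
  calc ∑' l, ENNReal.ofReal (listWeight κ s η l)
      ≤ ∑' l : List A, ((if l = [] then ENNReal.ofReal (1 - η) else 0) +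
          ENNReal.ofReal (η * (1 - s)) * ENNReal.ofReal (l.map κ).prod) := by
        refine ENNReal.tsum_le_tsum fun l => ?_
        rcases l with - | ⟨a, l⟩
        · simp [listWeight]
        · rw [if_neg (List.cons_ne_nil a l), zero_add, listWeight,
            ENNReal.ofReal_mul (mul_nonneg hη hs1.le)]
    _ = ENNReal.ofReal (1 - η) +
          ENNReal.ofReal η * (ENNReal.ofReal (1 - s) * (1 - ENNReal.ofReal (∑ a, κ a))⁻¹) := by
        rw [ENNReal.tsum_add, tsum_ite_eq, ENNReal.tsum_mul_left, tsum_list_prod hκ,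
          ENNReal.ofReal_mul hη, mul_assoc]
    _ ≤ ENNReal.ofReal (1 - η) + ENNReal.ofReal η * 1 := by
        gcongr
        exact (mul_le_mul_right (ENNReal.inv_le_inv.2 hgap) _).trans
          (ENNReal.mul_inv_le_one _)
    _ = 1 := by
        rw [mul_one, ← ENNReal.ofReal_add (sub_nonneg.2 hη1) hη, sub_add_cancel,
          ENNReal.ofReal_one]

lemma surprisal_listWeight_le (hκ : ∀ a, 0 < κ a) (hs : s < 1) (hη : 0 < η) (l : List A) :
    surprisal (listWeight κ s η l) ≤ surprisal (1 - η) +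
      {l : List A | l ≠ []}.indicator (fun _ => surprisal (η * (1 - s))) l +
      (l.map fun a => surprisal (κ a)).sum := by
  rcases l with - | ⟨a, l⟩
  · simp [listWeight]
  · have hprod : 0 < ((a :: l).map κ).prod := List.prod_pos (by simp [hκ])
    rw [indicator_of_mem (List.cons_ne_nil a l), add_assoc]
    refine le_add_left ((surprisal_mul_le (mul_pos hη (sub_pos.2 hs)).ne' hprod.ne').trans ?_)
    gcongr
    exact surprisal_list_prod_le hκ _

lemma shEnt_fibers_list_le {X : Type*} [MeasurableSpace X] (ν : Measure X)
    [IsProbabilityMeasure ν] [Fintype A] (hκ : ∀ a, 0 < κ a) (hsum : ∑ a, κ a ≤ s) (hs : s < 1)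
    (hη : 0 < η) (hη1 : η < 1) {R : X → List A} (hR : Measurable R) {C : Set X}
    (hRC : ∀ x ∉ C, R x = []) :
    shEnt ν (fibers R) ≤ surprisal (1 - η) + surprisal (η * (1 - s)) * ν C +
      ∫⁻ x, ((R x).map fun a => surprisal (κ a)).sum ∂ν := by
  have hne : MeasurableSet (R ⁻¹' {l | l ≠ []}) := hR (.of_discrete)
  calc shEnt ν (fibers R)
      ≤ ∫⁻ x, surprisal (listWeight κ s η (R x)) ∂ν :=
        shEnt_fibers_le_lintegral_surprisal ν hR (fun l => (listWeight_pos hκ hs hη hη1 l).le)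
          (tsum_listWeight_le (fun a => (hκ a).le) hsum hs hη.le hη1.le)
          fun l hl => absurd hl (listWeight_pos hκ hs hη hη1 l).ne'
    _ ≤ ∫⁻ x, surprisal (1 - η) +
          (R ⁻¹' {l | l ≠ []}).indicator (fun _ => surprisal (η * (1 - s))) x +
          ((R x).map fun a => surprisal (κ a)).sum ∂ν :=
        lintegral_mono fun x => surprisal_listWeight_le hκ hs hη (R x)
    _ = surprisal (1 - η) + surprisal (η * (1 - s)) * ν (R ⁻¹' {l | l ≠ []}) +
          ∫⁻ x, ((R x).map fun a => surprisal (κ a)).sum ∂ν := by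
        rw [lintegral_add_left ((measurable_const.indicator hne).const_add _),
          lintegral_add_left measurable_const, lintegral_indicator_const hne, lintegral_const,
          measure_univ, mul_one]
    _ ≤ surprisal (1 - η) + surprisal (η * (1 - s)) * ν C +
          ∫⁻ x, ((R x).map fun a => surprisal (κ a)).sum ∂ν := by
        gcongr
        exact fun x hx => by_contra fun hxC => hx (hRC x hxC)

end ListEntropy

section Gathering

variable {G X A : Type*} [Group G] [MulAction G X]

open scoped Classical in
/-- The value of `p` at the point `y` with `g n • y = c`, provided that `y` lies in `B n`. -/
noncomputable def visit (g : ℕ → G) (B : ℕ → Set X) (p : X → A) (n : ℕ) (c : X) : Option A :=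
  if (g n)⁻¹ • c ∈ B n then some (p ((g n)⁻¹ • c)) else none

/-- The values of `p` at the points that the first `K` elements of `g` bring to `c` from the
respective sets `B n`, listed in the order of `n`. -/
noncomputable def gather (g : ℕ → G) (B : ℕ → Set X) (p : X → A) (K : ℕ) (c : X) : List A :=
  (List.range K).filterMap fun n => visit g B p n c

variable {g : ℕ → G} {B : ℕ → Set X} {p : X → A}

lemma visit_of_mem {n : ℕ} {c : X} (hc : (g n)⁻¹ • c ∈ B n) :
    visit g B p n c = some (p ((g n)⁻¹ • c)) := if_pos hc

lemma visit_of_notMem {n : ℕ} {c : X} (hc : (g n)⁻¹ • c ∉ B n) : visit g B p n c = none :=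
  if_neg hc

lemma gather_succ (K : ℕ) (c : X) :
    gather g B p (K + 1) c = gather g B p K c ++ (visit g B p K c).toList := by
  rw [gather, List.range_succ, List.filterMap_append, ← gather]
  cases h : visit g B p K c <;> simp [h]

lemma gather_eq_nil {C : Set X} (hBC : ∀ n, ∀ x ∈ B n, g n • x ∈ C) (K : ℕ) {c : X}
    (hc : c ∉ C) : gather g B p K c = [] :=
  List.filterMap_eq_nil_iff.2 fun n _ =>
    visit_of_notMem fun h => hc (by simpa using hBC n _ h)

lemma length_gather (K : ℕ) (c : X) :
    (gather g B p K c).length = (gather g B (fun _ => ()) K c).length := by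
  induction K with
  | zero => rfl
  | succ K ih =>
    rw [gather_succ, gather_succ, List.length_append, List.length_append, ih]
    by_cases hc : (g K)⁻¹ • c ∈ B K
    · rw [visit_of_mem hc, visit_of_mem hc]; rfl
    · rw [visit_of_notMem hc, visit_of_notMem hc]; rfl

/-- The position of the value at `y` in the list is computed without knowing `p`. -/
lemma getElem?_gather {n K : ℕ} (hnK : n < K) {y : X} (hy : y ∈ B n) :
    (gather g B p K (g n • y))[(gather g B (fun _ => ()) n (g n • y)).length]? =
      some (p y) := by
  induction K, hnK using Nat.le_induction with
  | base =>
    have hy' : (g n)⁻¹ • g n • y ∈ B n := by rwa [inv_smul_smul]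
    rw [gather_succ, visit_of_mem hy', inv_smul_smul, ← length_gather (p := p)]
    exact List.getElem?_concat_length
  | succ K _ ih =>
    rw [gather_succ, List.getElem?_append_left (List.getElem?_eq_some_iff.1 ih).1, ih]

lemma sum_map_gather (L : A → ℝ≥0∞) (K : ℕ) (c : X) :
    ((gather g B p K c).map L).sum =
      ∑ n ∈ Finset.range K, (B n).indicator (fun y => L (p y)) ((g n)⁻¹ • c) := by
  induction K with
  | zero => rfl
  | succ K ih =>
    rw [gather_succ, List.map_append, List.sum_append, ih, Finset.sum_range_succ]
    congr 1
    by_cases hc : (g K)⁻¹ • c ∈ B K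
    · simp [visit_of_mem, hc]
    · simp [visit_of_notMem, hc]

variable [MeasurableSpace A]

lemma measurable_gather [Countable A] [MeasurableSingletonClass A] {m : MeasurableSpace X}
    (hm : InvariantAlg G m) (hB : ∀ n, MeasurableSet (B n)) (hp : Measurable p) (K : ℕ) :
    Measurable (gather g B p K) := by
  classical
  induction K with
  | zero => exact measurable_const
  | succ K ih =>
    have hsmul : Measurable fun c : X => (g K)⁻¹ • c := hm.measurable_smul _
    have happend : Measurable fun c => gather g B p K c ++ [p ((g K)⁻¹ • c)] :=
      (Measurable.of_discrete (f := fun q : List A × A => q.1 ++ [q.2])).comp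
        (ih.prodMk (hp.comp hsmul))
    have hsucc : gather g B p (K + 1) = fun c =>
        if (g K)⁻¹ • c ∈ B K then gather g B p K c ++ [p ((g K)⁻¹ • c)] else gather g B p K c := by
      funext c
      by_cases hc : (g K)⁻¹ • c ∈ B K
      · simp [gather_succ, visit_of_mem, hc]
      · simp [gather_succ, visit_of_notMem, hc]
    rw [hsucc]
    exact Measurable.ite (hsmul (hB K)) happend ih

lemma lintegral_sum_gather_le [mX : MeasurableSpace X] [MeasurableConstSMul G X] (μ : Measure X)
    [SMulInvariantMeasure G X μ] (hB : ∀ n, MeasurableSet (B n))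
    (hdisj : Pairwise (onFun Disjoint B)) {D : Set X} (hBD : ∀ n, B n ⊆ D) (hp : Measurable p)
    {L : A → ℝ≥0∞} (hL : Measurable L) (K : ℕ) :
    ∫⁻ c, ((gather g B p K c).map L).sum ∂μ ≤ ∫⁻ x in D, L (p x) ∂μ := by
  have hind (n : ℕ) : Measurable ((B n).indicator fun y => L (p y)) :=
    (hL.comp hp).indicator (hB n)
  calc ∫⁻ c, ((gather g B p K c).map L).sum ∂μ
      = ∑ n ∈ Finset.range K, ∫⁻ c, (B n).indicator (fun y => L (p y)) ((g n)⁻¹ • c) ∂μ := by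
        simp only [sum_map_gather]
        exact lintegral_finsetSum _ fun n _ => (hind n).comp (measurable_const_smul _)
    _ = ∑ n ∈ Finset.range K, ∫⁻ x in B n, L (p x) ∂μ := by
        refine Finset.sum_congr rfl fun n _ => ?_
        rw [← lintegral_indicator (hB n)]
        exact (measurePreserving_smul (g n)⁻¹ μ).lintegral_comp (hind n)
    _ ≤ ∑' n, ∫⁻ x in B n, L (p x) ∂μ := ENNReal.sum_le_tsum _
    _ = ∫⁻ x in ⋃ n, B n, L (p x) ∂μ := (lintegral_iUnion hB hdisj _).symm
    _ ≤ ∫⁻ x in D, L (p x) ∂μ := lintegral_mono_set (iUnion_subset hBD)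

end Gathering

section GridWeight

variable {A : Type*} [Fintype A]

/-- The probability weights on `A` proportional to `j + 1`. For `j` the integer parts of `K * t`
with `t` a probability vector, they approximate `t` from a finite set of weights. -/
noncomputable def gridWeight (j : A → ℕ) (a : A) : ℝ := (j a + 1) / ∑ b, ((j b : ℝ) + 1)

lemma gridWeight_pos (j : A → ℕ) (a : A) : 0 < gridWeight j a :=
  div_pos (by positivity) (Finset.sum_pos (fun _ _ => by positivity) ⟨a, Finset.mem_univ a⟩)

lemma sum_gridWeight_le (j : A → ℕ) : ∑ a, gridWeight j a ≤ 1 := by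
  simp only [gridWeight, ← Finset.sum_div]
  exact div_self_le_one _

lemma mul_div_le_gridWeight {t : A → ℝ} (ht : ∀ a, 0 ≤ t a) (hsum : ∑ a, t a ≤ 1) (K : ℕ)
    (a : A) :
    K * t a / (K + Fintype.card A) ≤ gridWeight (fun b => ⌊K * t b⌋₊) a := by
  have hden : ∑ b, ((⌊K * t b⌋₊ : ℝ) + 1) ≤ K + Fintype.card A := by
    calc ∑ b, ((⌊K * t b⌋₊ : ℝ) + 1) ≤ ∑ b, (K * t b + 1) := by
          gcongr with b
          exact Nat.floor_le (mul_nonneg K.cast_nonneg (ht b))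
      _ = K * ∑ b, t b + Fintype.card A := by simp [Finset.sum_add_distrib, Finset.mul_sum]
      _ ≤ K + Fintype.card A := by
          gcongr
          exact mul_le_of_le_one_right K.cast_nonneg hsum
  exact div_le_div₀ (by positivity) (Nat.lt_floor_add_one _).le
    (Finset.sum_pos (fun _ _ => by positivity) ⟨a, Finset.mem_univ a⟩) hden

lemma surprisal_gridWeight_le {t : A → ℝ} (ht : ∀ a, 0 ≤ t a) (hsum : ∑ a, t a ≤ 1) {K : ℕ}
    (hK : K ≠ 0) {a : A} (ha : t a ≠ 0) :
    surprisal (gridWeight (fun b => ⌊K * t b⌋₊) a) ≤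
      surprisal (t a) + ENNReal.ofReal (Fintype.card A / K) := by
  have : (0 : ℝ) < K := by positivity
  have hta : 0 < t a := (ht a).lt_of_ne' ha
  have hratio : 0 < (K : ℝ) / (K + Fintype.card A) := by positivity
  calc surprisal (gridWeight (fun b => ⌊K * t b⌋₊) a)
      ≤ surprisal (t a * (K / (K + Fintype.card A))) :=
        surprisal_anti (mul_pos hta hratio) (by
          rw [mul_div_left_comm, ← mul_div_assoc]
          exact mul_div_le_gridWeight ht hsum K a)
    _ ≤ surprisal (t a) + surprisal (K / (K + Fintype.card A)) := surprisal_mul_le ha hratio.ne'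
    _ ≤ surprisal (t a) + ENNReal.ofReal (Fintype.card A / K) := by
        gcongr
        rw [surprisal, ← Real.log_inv, inv_div]
        refine ENNReal.ofReal_le_ofReal ((Real.log_le_sub_one_of_pos (by positivity)).trans_eq ?_)
        field_simp
        ring

variable [MeasurableSpace A] [MeasurableSingletonClass A] {X : Type*}

lemma lintegral_surprisal_gridWeight_le [MeasurableSpace X] (ν : Measure X)
    [IsProbabilityMeasure ν] {p : X → A} (hp : Measurable p) {K : ℕ} (hK : K ≠ 0) :
    ∫⁻ y, surprisal (gridWeight (fun b => ⌊K * ν.real (fibers p b)⌋₊) (p y)) ∂ν ≤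
      shEnt ν (fibers p) + ENNReal.ofReal (Fintype.card A / K) := by
  have hsum : ∑ b, ν.real (fibers p b) ≤ 1 := by
    have htotal := tsum_measure_fibers ν hp
    rw [tsum_fintype, measure_univ] at htotal
    simp only [Measure.real]
    rw [← ENNReal.toReal_sum fun _ _ => measure_ne_top _ _, htotal, ENNReal.toReal_one]
  rw [shEnt_fibers_eq_lintegral ν hp]
  calc ∫⁻ y, surprisal (gridWeight (fun b => ⌊K * ν.real (fibers p b)⌋₊) (p y)) ∂ν
      ≤ ∫⁻ y, surprisal (ν.real (fibers p (p y))) + ENNReal.ofReal (Fintype.card A / K) ∂ν := by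
        refine lintegral_mono_ae ?_
        filter_upwards [ae_measure_fibers_ne_zero ν p] with y hy
        exact surprisal_gridWeight_le (fun _ => measureReal_nonneg) hsum hK
          ((measureReal_ne_zero_iff).2 hy)
    _ = _ := by
        rw [lintegral_add_right _ measurable_const, lintegral_const, measure_univ, mul_one]

end GridWeight

section GridCell

/-- The conditional distribution of `p` given `m`, rounded down to multiples of `1 / K`. -/
noncomputable def gridCell {A X : Type*} (m : MeasurableSpace X) [MeasurableSpace X]
    [StandardBorelSpace X] (μ : Measure X) [IsFiniteMeasure μ] (p : X → A) (K : ℕ) (x : X)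
    (b : A) : Fin (K + 1) :=
  Fin.ofNat (K + 1) ⌊K * (condExpKernel μ m x).real (fibers p b)⌋₊

variable {A X : Type*} {m : MeasurableSpace X} [mX : MeasurableSpace X] [StandardBorelSpace X]
  (μ : Measure X)

lemma val_gridCell [IsFiniteMeasure μ] (p : X → A) (K : ℕ) (x : X) (b : A) :
    (gridCell m μ p K x b : ℕ) = ⌊K * (condExpKernel μ m x).real (fibers p b)⌋₊ :=
  have : Nonempty X := ⟨x⟩
  Nat.mod_eq_of_lt (Nat.lt_succ_of_le (Nat.floor_le_of_le
    (mul_le_of_le_one_right K.cast_nonneg measureReal_le_one)))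

variable [MeasurableSpace A] [MeasurableSingletonClass A]

lemma measurable_gridCell [IsFiniteMeasure μ] {p : X → A} (hp : Measurable p) (K : ℕ) :
    Measurable[m] (gridCell m μ p K) := by
  have hreal (b : A) : Measurable[m] fun x => (condExpKernel μ m x).real (fibers p b) :=
    ENNReal.measurable_toReal.comp (measurable_condExpKernel (measurableSet_fibers hp b))
  have hfloor (b : A) : Measurable[m] fun x => ⌊K * (condExpKernel μ m x).real (fibers p b)⌋₊ :=
    Nat.measurable_floor.comp ((hreal b).const_mul _)
  exact @measurable_pi_lambda _ _ _ m _ _ fun b =>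
    (measurable_of_countable (Fin.ofNat (K + 1))).comp (hfloor b)

lemma setLIntegral_lintegral_condExpKernel_comp {J : Type*} [MeasurableSpace J]
    [MeasurableSingletonClass J] [Countable J] [Countable A] [IsFiniteMeasure μ] (hm : m ≤ mX)
    {c : X → J} (hc : Measurable[m] c) {p : X → A} (hp : Measurable p) (f : J → A → ℝ≥0∞)
    {W : Set X} (hW : MeasurableSet[m] W) :
    ∫⁻ x in W, ∫⁻ y, f (c x) (p y) ∂condExpKernel μ m x ∂μ = ∫⁻ x in W, f (c x) (p x) ∂μ := by
  have hf : Measurable (uncurry f) := measurable_of_countable _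
  exact setLIntegral_lintegral_condExpKernel μ hm (f := fun x y => f (c x) (p y))
    (hf.comp ((hc.comp (@measurable_fst X X m mX)).prodMk (hp.comp (@measurable_snd X X m mX)))) hW

variable [Fintype A]

lemma setLIntegral_surprisal_gridWeight_le (hm : m ≤ mX) [IsProbabilityMeasure μ] {p : X → A}
    (hp : Measurable p) {K : ℕ} (hK : K ≠ 0) {W : Set X} (hW : MeasurableSet[m] W) :
    ∫⁻ x in W, surprisal (gridWeight (fun b => (gridCell m μ p K x b : ℕ)) (p x)) ∂μ ≤
      ∫⁻ x in W, localEnt m μ p x ∂μ + ENNReal.ofReal (Fintype.card A / K) := by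
  calc ∫⁻ x in W, surprisal (gridWeight (fun b => (gridCell m μ p K x b : ℕ)) (p x)) ∂μ
      = ∫⁻ x in W, ∫⁻ y, surprisal (gridWeight (fun b => (gridCell m μ p K x b : ℕ)) (p y))
          ∂condExpKernel μ m x ∂μ :=
        (setLIntegral_lintegral_condExpKernel_comp μ hm (measurable_gridCell μ hp K) hp
          (fun j a => surprisal (gridWeight (fun b => (j b : ℕ)) a)) hW).symm
    _ ≤ ∫⁻ x in W, localEnt m μ p x + ENNReal.ofReal (Fintype.card A / K) ∂μ := by
        refine lintegral_mono fun x => ?_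
        simp only [val_gridCell]
        have : Nonempty X := ⟨x⟩
        exact lintegral_surprisal_gridWeight_le _ hp hK
    _ ≤ ∫⁻ x in W, localEnt m μ p x ∂μ + ENNReal.ofReal (Fintype.card A / K) := by
        rw [lintegral_add_right _ measurable_const, setLIntegral_const]
        gcongr
        exact mul_le_of_le_one_right' prob_le_one

/-- Scaling the grid weights by `exp (-1 / K)` costs `1 / K` and brings their total mass below `1`;
the mass set free pays for the lengths of the lists to be coded. -/
lemma exists_grid (hm : m ≤ mX) [IsProbabilityMeasure μ] {p : X → A} (hp : Measurable p)
    {ε : ℝ≥0∞} (hε : ε ≠ 0) :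
    ∃ (K : ℕ) (cell : X → A → Fin (K + 1)) (κ : (A → Fin (K + 1)) → A → ℝ) (s : ℝ),
      Measurable[m] cell ∧ (∀ j a, 0 < κ j a) ∧ (∀ j, ∑ a, κ j a ≤ s) ∧ s < 1 ∧
      ∀ W, MeasurableSet[m] W →
        ∫⁻ x in W, surprisal (κ (cell x) (p x)) ∂μ ≤ ∫⁻ x in W, localEnt m μ p x ∂μ + ε := by
  obtain ⟨K, hKε, hK⟩ : ∃ K : ℕ,
      ENNReal.ofReal (1 / K) + ENNReal.ofReal (Fintype.card A / K) < ε ∧ K ≠ 0 := by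
    have hlim (c : ℝ) : Tendsto (fun K : ℕ => ENNReal.ofReal (c / K)) atTop (𝓝 0) := by
      simpa using ENNReal.tendsto_ofReal (tendsto_const_div_atTop_nhds_zero_nat c)
    have hadd := (hlim 1).add (hlim (Fintype.card A))
    rw [add_zero] at hadd
    exact ((hadd.eventually_lt_const (pos_iff_ne_zero.2 hε)).and
      (Filter.eventually_ne_atTop 0)).exists
  have hs : 0 < Real.exp (-(1 / K)) := Real.exp_pos _
  have hs1 : Real.exp (-(1 / K)) < 1 := Real.exp_lt_one_iff.2 (by simpa using hK.bot_lt)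
  refine ⟨K, gridCell m μ p K,
    fun j a => Real.exp (-(1 / K)) * gridWeight (fun b => (j b : ℕ)) a, Real.exp (-(1 / K)),
    measurable_gridCell μ hp K, fun j a => mul_pos hs (gridWeight_pos _ a), fun j => ?_, hs1,
    fun W hW => ?_⟩
  · rw [← Finset.mul_sum]
    exact mul_le_of_le_one_right hs.le (sum_gridWeight_le _)
  have hcost (x : X) : surprisal (Real.exp (-(1 / K)) *
      gridWeight (fun b => (gridCell m μ p K x b : ℕ)) (p x)) ≤ ENNReal.ofReal (1 / K) +
        surprisal (gridWeight (fun b => (gridCell m μ p K x b : ℕ)) (p x)) := by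
    refine (surprisal_mul_le hs.ne' (gridWeight_pos _ _).ne').trans_eq ?_
    rw [surprisal, Real.log_exp, neg_neg]
  calc ∫⁻ x in W, surprisal (Real.exp (-(1 / K)) *
        gridWeight (fun b => (gridCell m μ p K x b : ℕ)) (p x)) ∂μ
      ≤ ENNReal.ofReal (1 / K) * μ W + ∫⁻ x in W,
          surprisal (gridWeight (fun b => (gridCell m μ p K x b : ℕ)) (p x)) ∂μ := by
        rw [← setLIntegral_const, ← lintegral_add_left measurable_const]
        exact lintegral_mono hcost
    _ ≤ ENNReal.ofReal (1 / K) +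
          (∫⁻ x in W, localEnt m μ p x ∂μ + ENNReal.ofReal (Fintype.card A / K)) :=
        add_le_add (mul_le_of_le_one_right' prob_le_one)
          (setLIntegral_surprisal_gridWeight_le μ hm hp hK hW)
    _ ≤ ∫⁻ x in W, localEnt m μ p x ∂μ + ε := by
        rw [add_left_comm]
        gcongr

end GridCell

section FactorAlgebras

variable {G X : Type*} [Group G] [MulAction G X]

/-- The largest σ-algebra with the same trace on `V` as `M`. -/
@[reducible] def traceAlg {X : Type*} (M : MeasurableSpace X) (V : Set X) : MeasurableSpace X :=
  (M.comap ((↑) : V → X)).map (↑)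

lemma measurableSet_traceAlg_iff {M : MeasurableSpace X} {V A : Set X}
    (hV : MeasurableSet[M] V) : MeasurableSet[traceAlg M V] A ↔ MeasurableSet[M] (A ∩ V) := by
  constructor
  · rintro ⟨B, hB, hBA⟩
    rw [inter_comm, ← Subtype.preimage_coe_eq_preimage_coe_iff.1 hBA]
    exact hV.inter hB
  · exact fun hA => ⟨A ∩ V, hA, Subtype.preimage_coe_inter_self V A⟩

lemma le_traceAlg (M : MeasurableSpace X) (V : Set X) : M ≤ traceAlg M V :=
  MeasurableSpace.comap_le_iff_le_map.1 le_rfl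

lemma measurable_traceAlg_univ {ι : Type*} [MeasurableSpace ι] {M : MeasurableSpace X}
    {f : X → ι} (hf : Measurable[traceAlg M univ] f) : Measurable[M] f := fun s hs => by
  simpa using (measurableSet_traceAlg_iff MeasurableSet.univ).1 (hf hs)

lemma measurable_traceAlg_of_eqOn {ι : Type*} [MeasurableSpace ι] {M : MeasurableSpace X}
    {V : Set X} {f f' : X → ι} (hff' : EqOn f f' V) (hf' : Measurable[M] f') :
    Measurable[traceAlg M V] f := fun s hs =>
  ⟨f' ⁻¹' s, hf' hs, Subtype.preimage_coe_eq_preimage_coe_iff.2 (by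
    ext x
    exact and_congr_right fun hx => by rw [mem_preimage, mem_preimage, hff' hx])⟩

/-- `M` is a `G`-invariant σ-algebra containing `m` and all `μ`-null sets; that is, up to null
sets, a factor of the action over `m`. -/
structure IsFactorAlg (G : Type*) {X : Type*} [Group G] [MulAction G X] (m : MeasurableSpace X)
    {mX : MeasurableSpace X} (μ : Measure X) (M : MeasurableSpace X) : Prop where
  invariant : InvariantAlg G M
  le : m ≤ M
  null : ∀ A, μ A = 0 → MeasurableSet[M] A

variable {m M mX : MeasurableSpace X} {μ : Measure X}

lemma isFactorAlg_eventuallyMeasurableSpace [MeasurableConstSMul G X]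
    [SMulInvariantMeasure G X μ] (hM : InvariantAlg G M) (hmM : m ≤ M) :
    IsFactorAlg G m μ (eventuallyMeasurableSpace M (ae μ)) where
  invariant := by
    rintro g A ⟨B, hB, hAB⟩
    exact ⟨_, hM g B hB, (measurePreserving_smul g μ).quasiMeasurePreserving.preimage_ae_eq hAB⟩
  le := fun A hA => (hmM A hA).eventuallyMeasurableSet
  null A hA := ⟨∅, @MeasurableSet.empty _ M, ae_eq_empty.2 hA⟩

namespace IsFactorAlg

lemma measurableSet_congr (hM : IsFactorAlg G m μ M) {A B : Set X} (hAB : A =ᵐ[μ] B)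
    (hB : MeasurableSet[M] B) : MeasurableSet[M] A := by
  have hsplit : A = B \ (B \ A) ∪ A \ B := by
    ext x
    simp only [mem_union, mem_sdiff]
    tauto
  rw [hsplit]
  exact (hB.diff (hM.null _ (ae_le_set.1 hAB.symm.le))).union (hM.null _ (ae_le_set.1 hAB.le))

lemma trace (hM : IsFactorAlg G m μ M) {V : Set X} (hV : MeasurableSet[m] V)
    (hVG : ∀ g : G, (fun x => g • x) ⁻¹' V = V) : IsFactorAlg G m μ (traceAlg M V) where
  invariant g A hA := by
    rw [measurableSet_traceAlg_iff (hM.le V hV)] at hA ⊢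
    have := hM.invariant g _ hA
    rwa [preimage_inter, hVG g] at this
  le := hM.le.trans (le_traceAlg M V)
  null A hA := le_traceAlg M V A (hM.null A hA)

end IsFactorAlg

/-- `p` can be reconstructed on `V` from a code of conditional entropy at most `c`: some
countable-valued function `b` with `H(b | m) ≤ c` determines `p` on `V` over `m`, equivariantly
and modulo null sets. -/
def RecoverableOn (G : Type*) {X : Type*} [Group G] [MulAction G X] (m : MeasurableSpace X)
    [MeasurableSpace X] (μ : Measure X) (p : X → ℕ) (V : Set X) (c : ℝ≥0∞) : Prop :=
  ∃ b : X → ℕ, Measurable b ∧ condEnt m μ (fibers b) ≤ c ∧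
    ∀ M, IsFactorAlg G m μ M → Measurable[M] b → Measurable[traceAlg M V] p

variable {p : X → ℕ}

lemma RecoverableOn.mono {V : Set X} {c c' : ℝ≥0∞} (h : RecoverableOn G m μ p V c)
    (hc : c ≤ c') : RecoverableOn G m μ p V c' :=
  let ⟨b, hb, hbc, hp⟩ := h
  ⟨b, hb, hbc.trans hc, hp⟩

variable [StandardBorelSpace X] [IsFiniteMeasure μ]

lemma recoverableOn_of_countable {ι : Type*} [MeasurableSpace ι] [MeasurableSingletonClass ι]
    [Countable ι] (hm : m ≤ mX) {b : X → ι} (hb : Measurable b) {V : Set X}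
    (hp : ∀ M, IsFactorAlg G m μ M → Measurable[M] b → Measurable[traceAlg M V] p) :
    RecoverableOn G m μ p V (condEnt m μ (fibers b)) := by
  obtain ⟨f, hf⟩ := exists_injective_nat ι
  refine ⟨f ∘ b, (measurable_of_countable f).comp hb, condEnt_fibers_comp_le hm μ hb f,
    fun M hM hfb => hp M hM ?_⟩
  refine measurable_to_countable' fun i => ?_
  have := hfb (measurableSet_singleton (f i))
  rwa [preimage_comp, ← image_singleton, hf.preimage_image] at this

lemma RecoverableOn.union (hm : m ≤ mX) {V V' : Set X} (hV : MeasurableSet[m] V)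
    (hV' : MeasurableSet[m] V') {c c' : ℝ≥0∞} (h : RecoverableOn G m μ p V c)
    (h' : RecoverableOn G m μ p V' c') : RecoverableOn G m μ p (V ∪ V') (c + c') := by
  obtain ⟨b, hb, hbc, hp⟩ := h
  obtain ⟨b', hb', hbc', hp'⟩ := h'
  refine (recoverableOn_of_countable hm (hb.prodMk hb') fun M hM hbb' s hs => ?_).mono
    ((condEnt_fibers_prodMk_le hm μ hb hb').trans (add_le_add hbc hbc'))
  have hVM := hM.le V hV
  have hVM' := hM.le V' hV'
  have hbM : Measurable[M] b := (@measurable_fst ℕ ℕ _ _).comp hbb'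
  have hbM' : Measurable[M] b' := (@measurable_snd ℕ ℕ _ _).comp hbb'
  rw [measurableSet_traceAlg_iff (hVM.union hVM'), inter_union_distrib_left]
  exact ((measurableSet_traceAlg_iff hVM).1 (hp M hM hbM hs)).union
    ((measurableSet_traceAlg_iff hVM').1 (hp' M hM hbM' hs))

end FactorAlgebras

section ConstantOff

variable {X ι : Type*} {m : MeasurableSpace X} [mX : MeasurableSpace X] [StandardBorelSpace X]
  {μ : Measure X} [IsFiniteMeasure μ] [MeasurableSpace ι] [MeasurableSingletonClass ι]
  [Countable ι]

lemma condEnt_fibers_eq_setLIntegral (hm : m ≤ mX) {a b : X → ι} (hb : Measurable b) {W : Set X}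
    (hW : MeasurableSet[m] W) (hab : EqOn a b W) {i : ι} (hi : ∀ x ∉ W, b x = i) :
    condEnt m μ (fibers b) = ∫⁻ x in W, localEnt m μ a x ∂μ := by
  have hconst (x : X) : localEnt m μ (fun _ => i) x = 0 := by
    refine ENNReal.tsum_eq_zero.2 fun j => ?_
    by_cases hij : i = j <;> simp [fibers, hij]
  rw [condEnt_fibers_eq_lintegral hm μ hb, ← lintegral_indicator (hm W hW)]
  refine lintegral_congr_ae ?_
  filter_upwards [localEnt_congr_on hm μ hW hab,
    localEnt_congr_on hm μ hW.compl (a := b) (a' := fun _ => i) hi] with x hxW hxW'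
  by_cases hx : x ∈ W
  · rw [indicator_of_mem hx, hxW hx]
  · rw [indicator_of_notMem hx, hxW' hx, hconst]

end ConstantOff

section ZeroEntropy

lemma measure_fibers_eq_zero_or_one {X ι : Type*} [MeasurableSpace X] {ν : Measure X}
    [IsProbabilityMeasure ν] {a : X → ι} (ha : shEnt ν (fibers a) = 0) (i : ι) :
    ν (fibers a i) = 0 ∨ ν (fibers a i) = 1 := by
  have hi : Real.negMulLog (ν.real (fibers a i)) = 0 :=
    (ENNReal.ofReal_eq_zero.1 (ENNReal.tsum_eq_zero.1 ha i)).antisymm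
      (Real.negMulLog_nonneg measureReal_nonneg measureReal_le_one)
  rw [Real.negMulLog, mul_eq_zero, neg_eq_zero, Real.log_eq_zero] at hi
  rcases hi with h | h | h | h
  · exact .inl ((measureReal_eq_zero_iff (measure_ne_top _ _)).1 h)
  · exact .inl ((measureReal_eq_zero_iff (measure_ne_top _ _)).1 h)
  · exact .inr ((ENNReal.toReal_eq_one_iff _).1 h)
  · linarith [measureReal_nonneg (μ := ν) (s := fibers a i)]

variable {G X ι : Type*} [Group G] [MulAction G X] {m m' : MeasurableSpace X}
  [mX : MeasurableSpace X] [StandardBorelSpace X] {μ : Measure X}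

variable [IsFiniteMeasure μ]

lemma exists_measurableSet_ae_eq_inter (hm : m ≤ mX) {A Z : Set X} (hA : MeasurableSet A)
    (hZ : MeasurableSet[m] Z)
    (hAZ : ∀ x ∈ Z, condExpKernel μ m x A = 0 ∨ condExpKernel μ m x A = 1) :
    ∃ U, MeasurableSet[m] U ∧ (A ∩ Z : Set X) =ᵐ[μ] U := by
  set U : Set X := {x | condExpKernel μ m x A = 1} ∩ Z
  have hU : MeasurableSet[m] U :=
    (measurable_condExpKernel hA (measurableSet_singleton 1)).inter hZ
  refine ⟨U, hU, ?_⟩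
  have hdiff : μ ((A ∩ Z) \ U) = 0 := by
    have hint := setLIntegral_condExpKernel_apply μ hm hA (hZ.diff hU)
    rw [show (A ∩ Z) \ U = A ∩ (Z \ U) from inter_sdiff_assoc .., ← hint]
    refine (setLIntegral_congr_fun (hm _ (hZ.diff hU)) fun x hx => ?_).trans (lintegral_zero ..)
    exact (hAZ x hx.1).resolve_right fun h => hx.2 ⟨h, hx.1⟩
  have hdiff' : μ (U \ (A ∩ Z)) = 0 := by
    have hint := setLIntegral_condExpKernel_apply μ hm hA.compl hU
    have hset : U \ (A ∩ Z) = Aᶜ ∩ U := by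
      ext x
      exact ⟨fun h => ⟨fun hA => h.2 ⟨hA, h.1.2⟩, h.1⟩, fun h => ⟨h.2, fun hx => h.1 hx.1⟩⟩
    rw [hset, ← hint]
    refine (setLIntegral_congr_fun (hm _ hU) fun x hx => ?_).trans (lintegral_zero ..)
    exact (prob_compl_eq_zero_iff hA).2 hx.1
  exact (ae_le_set.2 hdiff).antisymm (ae_le_set.2 hdiff')

lemma ae_condExpKernel_apply_eq (hmm' : m ≤ m') (hm' : m' ≤ mX) {A Z : Set X}
    (hA : MeasurableSet A) (hZ : MeasurableSet[m] Z)
    (htrace : m' ≤ traceAlg (eventuallyMeasurableSpace m (ae μ)) Z) :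
    ∀ᵐ x ∂μ, x ∈ Z → condExpKernel μ m x A = condExpKernel μ m' x A := by
  have hm := hmm'.trans hm'
  rw [← ae_restrict_iff' (hm Z hZ)]
  have hmeas : Measurable[m'] fun x => condExpKernel μ m x A :=
    (measurable_condExpKernel hA).mono hmm' le_rfl
  refine ae_eq_of_ae_eq_trim (hm := hm') ?_
  refine @ae_eq_of_forall_setLIntegral_eq_of_sigmaFinite X m' _ _ _ _ hmeas
    (measurable_condExpKernel hA) fun B hB _ => ?_
  obtain ⟨U, hU, hBU⟩ :=
    (measurableSet_traceAlg_iff (MeasurableSet.eventuallyMeasurableSet hZ)).1 (htrace B hB)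
  rw [restrict_trim hm' _ hB, lintegral_trim hm' hmeas,
    lintegral_trim hm' (measurable_condExpKernel hA), Measure.restrict_restrict (hm' B hB),
    setLIntegral_condExpKernel_apply μ hm' hA (hB.inter (hmm' Z hZ)),
    Measure.restrict_congr_set hBU, setLIntegral_condExpKernel_apply μ hm hA hU]
  exact measure_congr ((Filter.EventuallyEq.refl _ A).inter hBU.symm)

variable [MeasurableSpace ι] [MeasurableSingletonClass ι] [Countable ι]
  [MeasurableConstSMul G X] [SMulInvariantMeasure G X μ]

/-- Where `a` has no conditional entropy it is already known from `m`, hence so is `m'`, and the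
two conditional measures agree. -/
lemma recoverableOn_of_localEnt_eq_zero (hmm' : m ≤ m') (hm' : m' ≤ mX) (hmG : InvariantAlg G m)
    {a : X → ι} (ha : Measurable a)
    (hdet : ∀ M, IsFactorAlg G m μ M → Measurable[M] a → m' ≤ M) {Z : Set X}
    (hZ : MeasurableSet[m] Z) (hZG : ∀ g : G, (fun x => g • x) ⁻¹' Z = Z)
    (hZa : ∀ x ∈ Z, localEnt m μ a x = 0) {p : X → ℕ} (hp : Measurable p) :
    RecoverableOn G m μ p Z (∫⁻ x in Z, localEnt m' μ p x ∂μ) := by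
  classical
  have hm := hmm'.trans hm'
  have hfac := isFactorAlg_eventuallyMeasurableSpace (μ := μ) hmG (le_refl m)
  have htrace : m' ≤ traceAlg (eventuallyMeasurableSpace m (ae μ)) Z := by
    refine hdet _ (hfac.trace hZ hZG) (@measurable_to_countable' _ _ _ _ (_) _ fun i => ?_)
    rw [measurableSet_traceAlg_iff (hfac.le Z hZ)]
    exact exists_measurableSet_ae_eq_inter hm (measurableSet_fibers ha i) hZ fun x hx =>
      measure_fibers_eq_zero_or_one (hZa x hx) i
  have hlocal : ∀ᵐ x ∂μ, x ∈ Z → localEnt m μ p x = localEnt m' μ p x := by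
    filter_upwards [ae_all_iff.2 fun i =>
      ae_condExpKernel_apply_eq hmm' hm' (measurableSet_fibers hp i) hZ htrace] with x hx hxZ
    simp only [localEnt, shEnt, hx _ hxZ]
  set b : X → ℕ := Z.piecewise p fun _ => 0
  have hpb : EqOn p b Z := fun x hx => (piecewise_eq_of_mem _ _ _ hx).symm
  have hb : Measurable b := hp.piecewise (hm Z hZ) measurable_const
  refine (recoverableOn_of_countable hm hb fun M _ hbM =>
    measurable_traceAlg_of_eqOn hpb hbM).mono ?_
  rw [condEnt_fibers_eq_setLIntegral hm hb hZ hpb fun x hx => piecewise_eq_of_notMem _ _ _ hx]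
  exact (setLIntegral_congr_fun_ae (hm Z hZ) hlocal).le

end ZeroEntropy

section Transversal

variable {G X : Type*} [Group G] [MulAction G X] [Countable G] {m M mX : MeasurableSpace X}
  [MeasurableConstSMul G X] {C : Set X}

/-- A point of `C` names, together with a group element, each point of its orbit; so on the
orbits meeting `C` the fibres of `p` are expressed by `C` and invariant sets. -/
lemma measurableSet_inter_saturation (hM : InvariantAlg G M) (hI : invSigma G X ≤ M)
    (hC : MeasurableSet C) (hCM : MeasurableSet[M] C) (hone : IsPartialTransversal G C)
    {A : Set X} (hA : MeasurableSet A) : MeasurableSet[M] (A ∩ saturation G C) := by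
  have hE (g : G) : MeasurableSet[M] (saturation G (C ∩ (fun x => g⁻¹ • x) ⁻¹' A)) :=
    hI _ (measurableSet_invSigma_saturation (hC.inter (measurable_const_smul g⁻¹ hA)))
  have hunion : A ∩ saturation G C =
      ⋃ g : G, (fun x => g • x) ⁻¹' C ∩ saturation G (C ∩ (fun x => g⁻¹ • x) ⁻¹' A) := by
    ext x
    simp only [mem_inter_iff, mem_iUnion, mem_preimage]
    constructor
    · rintro ⟨hxA, g, hg⟩
      exact ⟨g, hg, g, hg, by rwa [mem_preimage, inv_smul_smul]⟩
    · rintro ⟨g, hg, h, hh, hhA⟩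
      refine ⟨?_, g, hg⟩
      have hgh := hone _ hg (h * g⁻¹) (by rwa [mul_smul, inv_smul_smul])
      rw [mul_smul, inv_smul_smul] at hgh
      rwa [mem_preimage, hgh, inv_smul_smul] at hhA
  rw [hunion]
  exact MeasurableSet.iUnion fun g => (hM g C hCM).inter (hE g)

lemma recoverableOn_saturation [StandardBorelSpace X] {μ : Measure X} [IsProbabilityMeasure μ]
    [SMulInvariantMeasure G X μ] {ι : Type*} [MeasurableSpace ι] [MeasurableSingletonClass ι]
    [Countable ι] (hm : m ≤ mX) (hI : invSigma G X ≤ m) {a : X → ι} (ha : Measurable a)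
    (hC : MeasurableSet C) (hone : IsPartialTransversal G C)
    (hCa : ∀ x ∈ C, localEnt m μ a x ≠ 0) {p : X → ℕ} (hp : Measurable p) :
    RecoverableOn G m μ p (saturation G C) (∫⁻ x in saturation G C, localEnt m μ a x ∂μ) := by
  have hCmeas : Measurable (· ∈ C) := measurableSet_setOfPred.1 hC
  have hsat := hI _ (measurableSet_invSigma_saturation (G := G) hC)
  refine (recoverableOn_of_countable hm hCmeas fun M hM hCM s hs => ?_).mono ?_
  · rw [measurableSet_traceAlg_iff (hM.le _ hsat)]
    exact measurableSet_inter_saturation hM.invariant (hI.trans hM.le) hC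
      ((@measurableSet_setOfPred _ M _).2 hCM) hone (hp hs)
  · rw [condEnt_fibers_eq_setLIntegral hm hCmeas hsat (fun _ _ => rfl) (i := False) fun x hx =>
      eq_false fun hxC => hx (subset_saturation C hxC)]
    exact lintegral_mono_ae
      (ae_restrict_of_ae (ae_localEnt_transversal_le μ hm hI ha hC hone hCa))

end Transversal

/-- As for lists: codes with values in an `Option` type are countable partitions. -/
instance optionMeasurableSpace {A : Type*} : MeasurableSpace (Option A) := ⊤

instance optionDiscreteMeasurableSpace {A : Type*} : DiscreteMeasurableSpace (Option A) :=
  ⟨fun _ => trivial⟩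

section MarkerCode

variable {G X A J : Type*} [Group G] [MulAction G X]

/-- The points whose first visit to `D` along `g` happens at time `K` or later. -/
def lateCell (g : ℕ → G) (D : Set X) (K : ℕ) : Set X := ⋃ n ≥ K, returnCell g D n

open scoped Classical in
/-- The value of `q` at the points which visit `D` for the first time at time `K` or later. -/
noncomputable def lateValue (g : ℕ → G) (D : Set X) (q : X → A) (K : ℕ) : X → Option A :=
  (lateCell g D K).piecewise (fun x => some (q x)) fun _ => none

/-- At a point of `D`: the list of values of `q` in the cell `j` of the partition `cell`, at the
points which visit `D` for the first time there and before time `K`. -/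
noncomputable def cellGather (g : ℕ → G) (D : Set X) (cell : X → J) (q : X → A) (K : ℕ) (j : J) :
    X → List A :=
  gather g (fun n => returnCell g D n ∩ fibers cell j) q K

variable {g : ℕ → G} {D : Set X} {cell : X → J} {q : X → A}

lemma fibers_lateValue_some (K : ℕ) (i : A) :
    fibers (lateValue g D q K) (some i) = lateCell g D K ∩ fibers q i := by
  ext x
  by_cases hx : x ∈ lateCell g D K <;> simp [fibers, lateValue, hx]

lemma lateValue_ne_none_iff {K : ℕ} {x : X} :
    lateValue g D q K x ≠ none ↔ x ∈ lateCell g D K := by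
  by_cases hx : x ∈ lateCell g D K <;> simp [lateValue, hx]

section Decoding

variable {M : MeasurableSpace X}

lemma measurableSet_inter_fibers_of_gather [Countable A] (hM : InvariantAlg G M) {B : ℕ → Set X}
    (hB : ∀ n, MeasurableSet[M] (B n)) {n K : ℕ} (hnK : n < K)
    (hR : Measurable[M] (gather g B q K)) (i : A) : MeasurableSet[M] (B n ∩ fibers q i) := by
  have hpos : Measurable[M] fun c => (gather g B (fun _ => ()) n c).length :=
    (measurable_of_countable List.length).comp (measurable_gather hM hB measurable_const n)
  have hread : Measurable[M] fun y => (gather g B q K (g n • y),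
      (gather g B (fun _ => ()) n (g n • y)).length) :=
    (hR.comp (hM.measurable_smul (g n))).prodMk (hpos.comp (hM.measurable_smul (g n)))
  convert (hB n).inter (hread (MeasurableSet.of_discrete (s := {y | y.1[y.2]? = some i}))) using 1
  ext y
  refine and_congr_right fun hy => ?_
  rw [mem_preimage, mem_ofPred_eq, getElem?_gather hnK hy, Option.some_inj]
  rfl

lemma measurable_of_cellGather [Countable A] [MeasurableSpace A] [Finite J]
    (hg : Surjective g) (hM : InvariantAlg G M) (hD : MeasurableSet[M] D)
    (hcell : ∀ j, MeasurableSet[M] (fibers cell j ∩ saturation G D)) {K : ℕ}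
    (hR : ∀ j, Measurable[M] (cellGather g D cell q K j))
    (hT : Measurable[M] (lateValue g D q K)) :
    Measurable[traceAlg M (saturation G D)] q := by
  have hreturn (n : ℕ) : MeasurableSet[M] (returnCell g D n) :=
    .disjointed (fun k => hM (g k) D hD) n
  have hsat : MeasurableSet[M] (saturation G D) := by
    rw [← iUnion_returnCell hg]
    exact .iUnion hreturn
  have hsub (n : ℕ) : returnCell g D n ⊆ saturation G D := by
    rw [← iUnion_returnCell hg]
    exact subset_iUnion _ n
  have hB (j : J) (n : ℕ) : MeasurableSet[M] (returnCell g D n ∩ fibers cell j) := by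
    rw [← inter_eq_left.2 (hsub n), inter_assoc, inter_comm (saturation G D)]
    exact (hreturn n).inter (hcell j)
  refine @measurable_to_countable' _ _ _ _ (_) _ fun i => ?_
  rw [measurableSet_traceAlg_iff hsat]
  have hsplit : q ⁻¹' {i} ∩ saturation G D = fibers (lateValue g D q K) (some i) ∪
      ⋃ n : Fin K, ⋃ j, (returnCell g D n ∩ fibers cell j) ∩ fibers q i := by
    rw [fibers_lateValue_some, ← iUnion_returnCell hg]
    ext x
    simp only [mem_inter_iff, mem_union, mem_iUnion, lateCell, fibers, mem_preimage,
      mem_singleton_iff, exists_prop]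
    constructor
    · rintro ⟨hx, n, hn⟩
      rcases lt_or_ge n K with hnK | hnK
      · exact .inr ⟨⟨n, hnK⟩, cell x, ⟨hn, rfl⟩, hx⟩
      · exact .inl ⟨⟨n, hnK, hn⟩, hx⟩
    · rintro (⟨⟨n, -, hn⟩, hx⟩ | ⟨n, j, ⟨hn, -⟩, hx⟩)
      exacts [⟨hx, n, hn⟩, ⟨hx, n, hn⟩]
  rw [hsplit]
  exact (measurableSet_fibers hT _).union (.iUnion fun n => .iUnion fun j =>
    measurableSet_inter_fibers_of_gather hM (hB j) n.2 (hR j) i)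

end Decoding

variable [mX : MeasurableSpace X] [MeasurableConstSMul G X]

lemma measurableSet_lateCell (hD : MeasurableSet D) (K : ℕ) :
    MeasurableSet (lateCell g D K) :=
  .iUnion fun n => .iUnion fun _ => measurableSet_returnCell g hD n

lemma measurable_lateValue [MeasurableSpace A] [DiscreteMeasurableSpace A] (hD : MeasurableSet D)
    (hq : Measurable q) (K : ℕ) : Measurable (lateValue g D q K) :=
  .piecewise (measurableSet_lateCell hD K) (Measurable.of_discrete.comp hq) measurable_const

lemma tendsto_measure_lateCell (μ : Measure X) [IsFiniteMeasure μ] (hD : MeasurableSet D) :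
    Tendsto (fun K => μ (lateCell g D K)) atTop (𝓝 0) :=
  tendsto_measure_biUnion_Ici_zero_of_pairwise_disjoint
    (fun n => (measurableSet_returnCell g hD n).nullMeasurableSet)
    (pairwise_disjoint_returnCell g D)

lemma measurable_cellGather [MeasurableSpace J] [MeasurableSingletonClass J] [MeasurableSpace A]
    [MeasurableSingletonClass A] [Countable A] (hD : MeasurableSet D) (hcell : Measurable cell)
    (hq : Measurable q) (K : ℕ) (j : J) : Measurable (cellGather g D cell q K j) :=
  measurable_gather (fun h _ hS => measurable_const_smul h hS)
    (fun n => (measurableSet_returnCell g hD n).inter (measurableSet_fibers hcell j)) hq K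

end MarkerCode

section MarkerCodeEntropy

variable {G X A J : Type*} [Group G] [MulAction G X] {g : ℕ → G} {D : Set X} {cell : X → J}
  {q : X → A} [mX : MeasurableSpace X] [MeasurableConstSMul G X] [Fintype J]
  [MeasurableSpace J] [MeasurableSingletonClass J] [MeasurableSpace A]
  [MeasurableSingletonClass A] {κ : J → A → ℝ} {s η : ℝ}
  (μ : Measure X) [SMulInvariantMeasure G X μ]

lemma lintegral_sum_cellGather_le [Countable A] (hg : Surjective g) (hD : MeasurableSet D)
    (hcell : Measurable cell) (hq : Measurable q) (L : J → A → ℝ≥0∞) (K : ℕ) :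
    ∑ j, ∫⁻ x, ((cellGather g D cell q K j x).map (L j)).sum ∂μ ≤
      ∫⁻ x in saturation G D, L (cell x) (q x) ∂μ := by
  have hL (j : J) : Measurable fun x => L j (q x) := (measurable_of_countable (L j)).comp hq
  have hfib := measurableSet_fibers hcell
  calc ∑ j, ∫⁻ x, ((cellGather g D cell q K j x).map (L j)).sum ∂μ
      ≤ ∑ j, ∫⁻ x in saturation G D ∩ fibers cell j, L j (q x) ∂μ := by
        refine Finset.sum_le_sum fun j _ => lintegral_sum_gather_le μ
          (fun n => (measurableSet_returnCell g hD n).inter (hfib j))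
          (fun m n hmn => (pairwise_disjoint_returnCell g D hmn).mono inter_subset_left
            inter_subset_left)
          (fun n => inter_subset_inter_left _ ?_) hq (measurable_of_countable (L j)) K
        rw [← iUnion_returnCell hg]
        exact subset_iUnion _ n
    _ = ∑ j, ∫⁻ x in saturation G D, (fibers cell j).indicator (fun x => L j (q x)) x ∂μ := by
        refine Finset.sum_congr rfl fun j _ => ?_
        rw [setLIntegral_indicator (hfib j), inter_comm]
    _ = ∫⁻ x in saturation G D, ∑ j, (fibers cell j).indicator (fun x => L j (q x)) x ∂μ :=
        (lintegral_finsetSum _ fun j _ => (hL j).indicator (hfib j)).symm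
    _ = ∫⁻ x in saturation G D, L (cell x) (q x) ∂μ := by
        refine lintegral_congr fun x => ?_
        rw [Fintype.sum_eq_single (cell x) fun j hj =>
          indicator_of_notMem (show x ∉ fibers cell j from hj.symm) _]
        exact indicator_of_mem (show x ∈ fibers cell (cell x) from rfl) _

lemma sum_shEnt_cellGather_le [IsProbabilityMeasure μ] [Fintype A] (hg : Surjective g)
    (hD : MeasurableSet D) (hcell : Measurable cell) (hq : Measurable q) (hκ : ∀ j a, 0 < κ j a)
    (hsum : ∀ j, ∑ a, κ j a ≤ s) (hs : s < 1) (hη : 0 < η) (hη1 : η < 1) (K : ℕ) :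
    ∑ j, shEnt μ (fibers (cellGather g D cell q K j)) ≤
      Fintype.card J * surprisal (1 - η) + Fintype.card J * (surprisal (η * (1 - s)) * μ D) +
        ∫⁻ x in saturation G D, surprisal (κ (cell x) (q x)) ∂μ := by
  calc ∑ j, shEnt μ (fibers (cellGather g D cell q K j))
      ≤ ∑ j, (surprisal (1 - η) + surprisal (η * (1 - s)) * μ D +
          ∫⁻ x, ((cellGather g D cell q K j x).map fun a => surprisal (κ j a)).sum ∂μ) :=
        Finset.sum_le_sum fun j _ => shEnt_fibers_list_le μ (hκ j) (hsum j) hs hη hη1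
          (measurable_cellGather hD hcell hq K j)
          fun x hx => gather_eq_nil (fun n y hy => smul_mem_of_mem_returnCell hy.1) K hx
    _ ≤ _ := by
        rw [Finset.sum_add_distrib, Finset.sum_add_distrib, Finset.sum_const, Finset.sum_const,
          Finset.card_univ, nsmul_eq_mul, nsmul_eq_mul]
        gcongr
        exact lintegral_sum_cellGather_le μ hg hD hcell hq (fun j a => surprisal (κ j a)) K

end MarkerCodeEntropy

lemma exists_card_mul_surprisal_one_sub_le (n : ℕ) {ε : ℝ≥0∞} (hε : ε ≠ 0) :
    ∃ η : ℝ, 0 < η ∧ η < 1 ∧ n * surprisal (1 - η) ≤ ε := by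
  have hlim : Tendsto (fun η => (n : ℝ≥0∞) * surprisal (1 - η)) (𝓝 0) (𝓝 0) := by
    have hlog : Tendsto (fun η : ℝ => -Real.log (1 - η)) (𝓝 0) (𝓝 0) := by
      have : ContinuousAt (fun η : ℝ => -Real.log (1 - η)) 0 :=
        ((continuous_const.sub continuous_id).continuousAt.log (by simp)).neg
      simpa [ContinuousAt] using this
    have hsurprisal : Tendsto (fun η => surprisal (1 - η)) (𝓝 0) (𝓝 0) := by
      simpa [surprisal] using ENNReal.tendsto_ofReal hlog
    simpa using ENNReal.Tendsto.const_mul hsurprisal (.inr (ENNReal.natCast_ne_top n))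
  have hsmall := (ENNReal.tendsto_nhds_zero.1 hlim ε (pos_iff_ne_zero.2 hε)).filter_mono
    (nhdsWithin_le_nhds (s := Ioi 0))
  obtain ⟨η, hη, hη0, hη1⟩ := (hsmall.and (Ioo_mem_nhdsGT one_pos)).exists
  exact ⟨η, hη0, hη1, hη⟩

section SparseMarkers

variable {G X A : Type*} [Group G] [MulAction G X] {m : MeasurableSpace X}
  [mX : MeasurableSpace X] [StandardBorelSpace X] [MeasurableConstSMul G X] {D : ℕ → Set X}
  {W : Set X} (μ : Measure X) [IsProbabilityMeasure μ] [SMulInvariantMeasure G X μ]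

lemma exists_sparse_cellGather [Fintype A] [DecidableEq A] [MeasurableSpace A]
    [MeasurableSingletonClass A] (hm : m ≤ mX) {g : ℕ → G} (hg : Surjective g)
    (hW : MeasurableSet[m] W) (hD : ∀ n, MeasurableSet (D n))
    (hDW : ∀ n, saturation G (D n) = W) (hD0 : Tendsto (fun n => μ (D n)) atTop (𝓝 0))
    {q : X → A} (hq : Measurable q) {ε : ℝ≥0∞} (hε : ε ≠ 0) :
    ∃ (k : ℕ) (cell : X → A → Fin (k + 1)) (n : ℕ), Measurable[m] cell ∧
      shEnt μ (fibers (· ∈ D n)) ≤ ε ∧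
      ∀ K, ∑ j, shEnt μ (fibers (cellGather g (D n) cell q K j)) ≤
        ∫⁻ x in W, localEnt m μ q x ∂μ + ε := by
  have hε3 : ε / 3 ≠ 0 := (ENNReal.div_pos hε (by simp)).ne'
  obtain ⟨k, cell, κ, s, hcell, hκ, hsum, hs, hgrid⟩ := exists_grid μ hm hq hε3
  set c : ℕ := Fintype.card (A → Fin (k + 1))
  obtain ⟨η, hη, hη1, hcη⟩ := exists_card_mul_surprisal_one_sub_le c hε3
  have hlim : Tendsto (fun n => c * (surprisal (η * (1 - s)) * μ (D n))) atTop (𝓝 0) := by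
    have hfin : surprisal (η * (1 - s)) ≠ ⊤ := ENNReal.ofReal_ne_top
    simpa using ENNReal.Tendsto.const_mul (ENNReal.Tendsto.const_mul hD0 (.inr hfin))
      (.inr (ENNReal.natCast_ne_top c))
  have hmarker : Tendsto (fun n => shEnt μ (fibers (· ∈ D n))) atTop (𝓝 0) :=
    tendsto_shEnt_fibers_zero_of_finite μ (k := False)
      (fun n => measurableSet_setOfPred.1 (hD n)) (by simpa using hD0)
  obtain ⟨n, hcn, hn⟩ := ((ENNReal.tendsto_nhds_zero.1 hlim _ (pos_iff_ne_zero.2 hε3)).and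
    (ENNReal.tendsto_nhds_zero.1 hmarker ε (pos_iff_ne_zero.2 hε))).exists
  refine ⟨k, cell, n, hcell, hn, fun K => ?_⟩
  calc ∑ j, shEnt μ (fibers (cellGather g (D n) cell q K j))
      ≤ c * surprisal (1 - η) + c * (surprisal (η * (1 - s)) * μ (D n)) +
          ∫⁻ x in saturation G (D n), surprisal (κ (cell x) (q x)) ∂μ :=
        sum_shEnt_cellGather_le μ hg (hD n) (hcell.mono hm le_rfl) hq hκ hsum hs hη hη1 K
    _ ≤ ε / 3 + ε / 3 + (∫⁻ x in W, localEnt m μ q x ∂μ + ε / 3) := by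
        gcongr
        exact hDW n ▸ hgrid W hW
    _ = ∫⁻ x in W, localEnt m μ q x ∂μ + ε := by
        rw [add_comm, add_assoc, add_comm (ε / 3), ENNReal.add_thirds]

end SparseMarkers

/-- The part of an `ℕ`-valued code up to `N`; larger values are sent to `0`. Together with
`tail N` it determines the code. -/
def head (N i : ℕ) : Fin (N + 1) := Fin.ofNat (N + 1) (i - tail N i)

lemma tail_add_head (N i : ℕ) : tail N i + head N i = i := by
  by_cases hi : N < i
  · simp [tail, head, hi]
  · simp [tail, head, hi, Nat.mod_eq_of_lt (Nat.lt_succ_of_le (not_lt.1 hi))]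

lemma measurable_of_tail_head {X : Type*} {M : MeasurableSpace X} {p : X → ℕ} {N : ℕ}
    (htail : Measurable[M] (tail N ∘ p)) (hhead : Measurable[M] (head N ∘ p)) :
    Measurable[M] p := by
  have hsum : p = (fun y : ℕ × Fin (N + 1) => y.1 + y.2) ∘
      fun x => ((tail N ∘ p) x, (head N ∘ p) x) :=
    funext fun x => (tail_add_head N (p x)).symm
  rw [hsum]
  exact (measurable_of_countable _).comp (htail.prodMk hhead)

section MarkerCodes

variable {G X A J : Type*} [Group G] [MulAction G X] {m mX : MeasurableSpace X}

/-- The code determining `q` on the saturation of `D`: the set `D` itself, the lists of values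
collected at the points of `D`, and the values at the points which reach `D` too late. -/
noncomputable def markerCode (g : ℕ → G) (D : Set X) (cell : X → J) (q : X → A) (K : ℕ) (x : X) :
    (Prop × Option A) × (J → List A) :=
  ((x ∈ D, lateValue g D q K x), fun j => cellGather g D cell q K j x)

lemma measurable_of_markerCode {M : MeasurableSpace X} (hM : InvariantAlg G M) [Countable A]
    [MeasurableSpace A] [Finite J] {g : ℕ → G} (hg : Surjective g) {D : Set X} {cell : X → J}
    {q : X → A} {K : ℕ} (hcell : ∀ j, MeasurableSet[M] (fibers cell j ∩ saturation G D))
    (hcode : Measurable[M] (markerCode g D cell q K)) :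
    Measurable[traceAlg M (saturation G D)] q :=
  measurable_of_cellGather hg hM ((@measurableSet_setOfPred _ M _).2 hcode.fst.fst) hcell
    (fun j => (measurable_pi_iff.1 hcode.snd) j) hcode.fst.snd

lemma measurable_of_tail_markerCode {M m' : MeasurableSpace X} (hM : InvariantAlg G M) [Finite J]
    [MeasurableSpace J] [MeasurableSingletonClass J] {g : ℕ → G} (hg : Surjective g) {D W : Set X}
    (hDW : saturation G D = W) (hW : MeasurableSet[M] W) (hm'W : m' ≤ traceAlg M W) {cell : X → J}
    (hcell : Measurable[m'] cell) {p : X → ℕ} {N K : ℕ} (htail : Measurable[M] (tail N ∘ p))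
    (hcode : Measurable[M] (markerCode g D cell (head N ∘ p) K)) :
    Measurable[traceAlg M W] p := by
  subst hDW
  refine measurable_of_tail_head (htail.mono (le_traceAlg M _) le_rfl)
    (measurable_of_markerCode hM hg (fun j => ?_) hcode)
  exact (measurableSet_traceAlg_iff hW).1 (hm'W _ (hcell (measurableSet_singleton j)))

variable [MeasurableConstSMul G X]

lemma measurable_markerCode [MeasurableSpace J] [MeasurableSingletonClass J] [MeasurableSpace A]
    [MeasurableSingletonClass A] [Countable A] {g : ℕ → G} {D : Set X} (hD : MeasurableSet D)
    {cell : X → J} (hcell : Measurable cell) {q : X → A} (hq : Measurable q) (K : ℕ) :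
    Measurable (markerCode g D cell q K) :=
  ((measurableSet_setOfPred.1 hD).prodMk (measurable_lateValue hD hq K)).prodMk
    (measurable_pi_lambda _ (measurable_cellGather hD hcell hq K))

lemma exists_markerCode [Finite A] [MeasurableSpace A]
    [MeasurableSingletonClass A] [StandardBorelSpace X] (μ : Measure X)
    [IsProbabilityMeasure μ] [SMulInvariantMeasure G X μ] (hm : m ≤ mX) {g : ℕ → G}
    (hg : Surjective g) {W : Set X} (hW : MeasurableSet[m] W) {D : ℕ → Set X}
    (hD : ∀ n, MeasurableSet (D n)) (hDW : ∀ n, saturation G (D n) = W)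
    (hD0 : Tendsto (fun n => μ (D n)) atTop (𝓝 0)) {q : X → A} (hq : Measurable q) {ε : ℝ≥0∞}
    (hε : ε ≠ 0) :
    ∃ (k : ℕ) (cell : X → A → Fin (k + 1)) (n K : ℕ), Measurable[m] cell ∧
      shEnt μ (fibers (markerCode g (D n) cell q K)) ≤ ∫⁻ x in W, localEnt m μ q x ∂μ + ε := by
  classical
  have := Fintype.ofFinite A
  have hε3 : 0 < ε / 3 := ENNReal.div_pos hε (by simp)
  obtain ⟨k, cell, n, hcell, hDn, hgather⟩ :=
    exists_sparse_cellGather μ hm hg hW hD hDW hD0 hq hε3.ne'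
  have hlate (K : ℕ) := measurable_lateValue (g := g) (hD n) hq K
  have hlate_entropy : Tendsto (fun K => shEnt μ (fibers (lateValue g (D n) q K))) atTop (𝓝 0) :=
    tendsto_shEnt_fibers_zero_of_finite μ hlate (k := none)
      (by simp only [lateValue_ne_none_iff]; exact tendsto_measure_lateCell μ (hD n))
  obtain ⟨K, hK⟩ := (ENNReal.tendsto_nhds_zero.1 hlate_entropy _ hε3).exists
  have hgather_meas := measurable_cellGather (g := g) (hD n) (hcell.mono hm le_rfl) hq K
  have hmem : Measurable (· ∈ D n) := measurableSet_setOfPred.1 (hD n)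
  refine ⟨k, cell, n, K, hcell, ?_⟩
  calc shEnt μ (fibers (markerCode g (D n) cell q K))
      ≤ (shEnt μ (fibers (· ∈ D n)) + shEnt μ (fibers (lateValue g (D n) q K))) +
          ∑ j, shEnt μ (fibers (cellGather g (D n) cell q K j)) :=
        (shEnt_fibers_prodMk_le μ (hmem.prodMk (hlate K))
          (measurable_pi_lambda _ hgather_meas)).trans
          (add_le_add (shEnt_fibers_prodMk_le μ hmem (hlate K)) (shEnt_fibers_pi_le μ hgather_meas))
    _ ≤ (ε / 3 + ε / 3) + (∫⁻ x in W, localEnt m μ q x ∂μ + ε / 3) :=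
        add_le_add (add_le_add hDn hK) (hgather K)
    _ = ∫⁻ x in W, localEnt m μ q x ∂μ + ε := by
        rw [← add_assoc, add_comm _ (lintegral _ _), add_assoc, ENNReal.add_thirds]

end MarkerCodes

section SparseMarkersRecovery

variable {G X : Type*} [Group G] [MulAction G X] {m m' mX : MeasurableSpace X} {W : Set X}
  {μ : Measure X} [Countable G] [StandardBorelSpace X] [MeasurableConstSMul G X]
  [IsProbabilityMeasure μ] [SMulInvariantMeasure G X μ]

/-- The values of `a` on `W` determine `m'` there, hence the cells; knowing these, the lists
collected at the markers return the values of `p` up to `N`. -/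
lemma recoverableOn_of_sparse_markers (hmm' : m ≤ m') (hm' : m' ≤ mX) {a p : X → ℕ}
    (ha : Measurable a) (hdet : ∀ M, IsFactorAlg G m μ M → Measurable[M] a → m' ≤ M)
    (hp : Measurable p) (hpfin : condEnt m μ (fibers p) ≠ ⊤) (hW : MeasurableSet[m] W)
    {D : ℕ → Set X} (hD : ∀ n, MeasurableSet (D n)) (hDW : ∀ n, saturation G (D n) = W)
    (hD0 : Tendsto (fun n => μ (D n)) atTop (𝓝 0)) {ε : ℝ≥0∞} (hε : ε ≠ 0) :
    RecoverableOn G m μ p W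
      (∫⁻ x in W, localEnt m μ a x ∂μ + ∫⁻ x in W, localEnt m' μ p x ∂μ + ε) := by
  classical
  have hm := hmm'.trans hm'
  obtain ⟨g, hg⟩ := exists_surjective_nat G
  have hε2 := ENNReal.half_pos hε
  obtain ⟨N, hN⟩ :=
    (ENNReal.tendsto_nhds_zero.1 (tendsto_condEnt_fibers_tail hm μ hp hpfin) _ hε2).exists
  have htail : Measurable (tail N ∘ p) := (measurable_of_countable _).comp hp
  have hhead : Measurable (head N ∘ p) := (measurable_of_countable _).comp hp
  obtain ⟨k, cell, n, K, hcell, hcode⟩ :=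
    exists_markerCode μ hm' hg (hmm' W hW) hD hDW hD0 hhead hε2.ne'
  set c := markerCode g (D n) cell (head N ∘ p) K
  have hc : Measurable c := measurable_markerCode (hD n) (hcell.mono hm' le_rfl) hhead K
  set a' : X → ℕ := W.piecewise a fun _ => 0
  have haa' : EqOn a a' W := fun x hx => (piecewise_eq_of_mem _ _ _ hx).symm
  have ha' : Measurable a' := ha.piecewise (hm W hW) measurable_const
  refine (recoverableOn_of_countable hm ((ha'.prodMk htail).prodMk hc) fun M hM
    hM_code => ?_).mono ?_
  · have hWG (h : G) : (fun x => h • x) ⁻¹' W = W := by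
      rw [← hDW n]
      exact ext fun x => smul_mem_saturation
    have hm'W : m' ≤ traceAlg M W :=
      hdet _ (hM.trace hW hWG) (measurable_traceAlg_of_eqOn haa' hM_code.fst.fst)
    exact measurable_of_tail_markerCode hM.invariant hg (hDW n) (hM.le W hW) hm'W hcell
      hM_code.fst.snd hM_code.snd
  · have hhead_le : ∫⁻ x in W, localEnt m' μ (head N ∘ p) x ∂μ ≤ ∫⁻ x in W, localEnt m' μ p x ∂μ :=
      lintegral_mono fun x => shEnt_fibers_comp_le _ hp _
    have ha'_eq : condEnt m μ (fibers a') = ∫⁻ x in W, localEnt m μ a x ∂μ :=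
      condEnt_fibers_eq_setLIntegral hm ha' hW haa' fun x hx => piecewise_eq_of_notMem _ _ _ hx
    calc condEnt m μ (fibers fun x => ((a' x, (tail N ∘ p) x), c x))
        ≤ (condEnt m μ (fibers a') + condEnt m μ (fibers (tail N ∘ p))) + condEnt m μ (fibers c) :=
          (condEnt_fibers_prodMk_le hm μ (ha'.prodMk htail) hc).trans
            (add_le_add_left (condEnt_fibers_prodMk_le hm μ ha' htail) _)
      _ ≤ (∫⁻ x in W, localEnt m μ a x ∂μ + ε / 2) +
          (∫⁻ x in W, localEnt m' μ p x ∂μ + ε / 2) :=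
          add_le_add (add_le_add ha'_eq.le hN)
            ((condEnt_le_shEnt hm μ (measurableSet_fibers hc)).trans
              (hcode.trans (add_le_add_left hhead_le _)))
      _ = _ := by rw [add_add_add_comm, ENNReal.add_halves]

end SparseMarkersRecovery

section Recovery

variable {G X : Type*} [Group G] [MulAction G X] {m m' mX : MeasurableSpace X} {μ : Measure X}

lemma saturation_inter_of_invariant {D W : Set X} (hW : ∀ g : G, (fun x => g • x) ⁻¹' W = W)
    (hWD : W ⊆ saturation G D) : saturation G (D ∩ W) = W := by
  have hW' (g : G) (x : X) : g • x ∈ W ↔ x ∈ W := Set.ext_iff.1 (hW g) x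
  ext x
  constructor
  · rintro ⟨g, -, hg⟩
    exact (hW' g x).1 hg
  · intro hx
    obtain ⟨g, hg⟩ := hWD hx
    exact ⟨g, hg, (hW' g x).2 hx⟩

lemma setLIntegral_add_le {f : X → ℝ≥0∞} {A B : Set X} (hB : MeasurableSet B)
    (hAB : Disjoint A B) : ∫⁻ x in A, f x ∂μ + ∫⁻ x in B, f x ∂μ ≤ ∫⁻ x, f x ∂μ := by
  rw [← lintegral_union hB hAB]
  exact setLIntegral_le_lintegral _ _

variable [Countable G] [StandardBorelSpace X] [MeasurableConstSMul G X]
  [IsProbabilityMeasure μ] [SMulInvariantMeasure G X μ]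

lemma recoverableOn_univ (hI : invSigma G X ≤ m) (hmm' : m ≤ m') (hm' : m' ≤ mX)
    (hmG : InvariantAlg G m) {a p : X → ℕ} (ha : Measurable a)
    (hdet : ∀ M, IsFactorAlg G m μ M → Measurable[M] a → m' ≤ M) (hp : Measurable p)
    (hpfin : condEnt m μ (fibers p) ≠ ⊤) {ε : ℝ≥0∞} (hε : ε ≠ 0) :
    RecoverableOn G m μ p univ (condEnt m μ (fibers a) + condEnt m' μ (fibers p) + ε) := by
  have hm := hmm'.trans hm'
  have hN : MeasurableSet {x | localEnt m μ a x ≠ 0} :=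
    hm _ (measurable_localEnt μ ha (measurableSet_singleton 0).compl)
  obtain ⟨C, D, hC, hD, hCN, hone, hDW, hD0⟩ := exists_partialTransversal_and_markers (G := G) μ hN
  have hSI := measurableSet_invSigma_saturation (G := G) hN
  have hYI := measurableSet_invSigma_saturation (G := G) hC
  have hNS := subset_saturation (G := G) {x | localEnt m μ a x ≠ 0}
  set S := saturation G {x | localEnt m μ a x ≠ 0}
  set Y := saturation G C
  have hWI : MeasurableSet[invSigma G X] (S \ Y) := hSI.diff hYI
  have hW := invSigma_le _ hWI
  have hWG := (measurableSet_invSigma_iff.1 hWI).2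
  have hZ := recoverableOn_of_localEnt_eq_zero hmm' hm' hmG ha hdet (hI _ hSI.compl)
    (measurableSet_invSigma_iff.1 hSI.compl).2 (fun x hx => not_not.1 fun h => hx (hNS h)) hp
  have hY := recoverableOn_saturation hm hI ha hC hone hCN hp
  have hW_rec := recoverableOn_of_sparse_markers hmm' hm' ha hdet hp hpfin (hI _ hWI)
    (fun n => (hD n).inter hW) (fun n => saturation_inter_of_invariant hWG (hDW n))
    (tendsto_of_tendsto_of_tendsto_of_le_of_le tendsto_const_nhds hD0 (fun _ => zero_le)
      fun n => measure_mono inter_subset_left) hε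
  have hcover : Sᶜ ∪ Y ∪ S \ Y = univ := by
    ext x
    simp only [mem_union, mem_compl_iff, mem_sdiff, mem_univ, iff_true]
    tauto
  rw [← hcover, condEnt_fibers_eq_lintegral hm μ ha, condEnt_fibers_eq_lintegral hm' μ hp]
  refine ((hZ.union hm (hI _ hSI.compl) (hI _ hYI) hY).union hm
    (hI _ (hSI.compl.union hYI)) (hI _ hWI) hW_rec).mono ?_
  calc _ = (∫⁻ x in Y, localEnt m μ a x ∂μ + ∫⁻ x in S \ Y, localEnt m μ a x ∂μ) +
        (∫⁻ x in Sᶜ, localEnt m' μ p x ∂μ + ∫⁻ x in S \ Y, localEnt m' μ p x ∂μ) + ε := by ring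
    _ ≤ _ := by
      gcongr
      · exact setLIntegral_add_le hW disjoint_sdiff_right
      · exact setLIntegral_add_le hW (disjoint_compl_left.mono_right sdiff_subset)

end Recovery

section OuterRokhlin

variable {G X : Type*} [Group G] [MulAction G X] {F mX : MeasurableSpace X}

lemma IsPartition.exists_eq_fibers {P : ℕ → Set X} (hP : IsPartition P) :
    ∃ p : X → ℕ, Measurable p ∧ P = fibers p := by
  obtain ⟨hmeas, hdisj, hcover⟩ := hP
  have hmem (x : X) : ∃ i, x ∈ P i := mem_iUnion.1 (hcover ▸ mem_univ x)
  choose p hp using hmem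
  have hfib : P = fibers p := by
    ext i x
    refine ⟨fun hx => ?_, fun hx => hx ▸ hp x⟩
    by_contra hne
    exact (hdisj hne).notMem_of_mem_left (hp x) hx
  refine ⟨p, measurable_to_countable' fun i => ?_, hfib⟩
  rw [show p ⁻¹' {i} = P i from congrFun hfib.symm i]
  exact hmeas i

lemma isPartition_fibers {p : X → ℕ} (hp : Measurable p) : IsPartition (fibers p) :=
  ⟨measurableSet_fibers hp, fun _ _ hij => disjoint_left.2 fun _ hi hj => hij (hi.symm.trans hj),
    eq_univ_of_forall fun x => mem_iUnion.2 ⟨p x, rfl⟩⟩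

lemma SubsetMod.generateFrom_sup_le {m M mX : MeasurableSpace X} {μ : Measure X} {a : X → ℕ}
    {ξ : Set (Set X)} (hξ : SubsetMod (sigmaG G (range (fibers a)) ⊔ m) μ ξ)
    (hM : IsFactorAlg G m μ M) (ha : Measurable[M] a) : MeasurableSpace.generateFrom ξ ⊔ m ≤ M := by
  have hle : sigmaG G (range (fibers a)) ⊔ m ≤ M := by
    refine sup_le (MeasurableSpace.generateFrom_le ?_) hM.le
    rintro _ ⟨g, _, ⟨i, rfl⟩, rfl⟩
    exact hM.invariant g _ (ha (measurableSet_singleton i))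
  refine sup_le (MeasurableSpace.generateFrom_le fun A hA => ?_) hM.le
  obtain ⟨B, hB, hAB⟩ := hξ A hA
  exact hM.measurableSet_congr (measure_symmDiff_eq_zero_iff.1 hAB) (hle _ hB)

variable {μ : Measure X} [MeasurableConstSMul G X] [SMulInvariantMeasure G X μ]

lemma RecoverableOn.outerRokhlin_le (hFinv : InvariantAlg G F) {p : X → ℕ} {c : ℝ≥0∞}
    (h : RecoverableOn G (F ⊔ invSigma G X) μ p univ c) :
    outerRokhlin G (range (fibers p)) F μ ≤ c := by
  obtain ⟨b, hb, hbc, hp⟩ := h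
  refine le_trans (sInf_le ⟨_, isPartition_fibers hb, ?_, rfl⟩) hbc
  have hM := isFactorAlg_eventuallyMeasurableSpace (m := F ⊔ invSigma G X) (μ := μ)
    (((invariantAlg_sigmaG (G := G) (range (fibers b))).sup hFinv).sup invariantAlg_invSigma)
    (sup_le_sup_right le_sup_right _)
  have hbM (i : ℕ) : MeasurableSet[sigmaG G (range (fibers b)) ⊔ F ⊔ invSigma G X] (b ⁻¹' {i}) :=
    (le_sup_left.trans le_sup_left :
      sigmaG G (range (fibers b)) ≤ _) _ (measurableSet_sigmaG (mem_range_self i))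
  have hpM := measurable_traceAlg_univ (hp _ hM (@measurable_to_countable' _ _ _ _ (_) _
    fun i => (hbM i).eventuallyMeasurableSet))
  rintro _ ⟨i, rfl⟩
  obtain ⟨B, hB, hAB⟩ := hpM (measurableSet_singleton i)
  exact ⟨B, hB, measure_symmDiff_eq_zero_iff.2 hAB⟩

variable [Countable G] [StandardBorelSpace X] [IsProbabilityMeasure μ]

lemma outerRokhlin_fibers_le (hF : F ≤ mX) (hFinv : InvariantAlg G F) {a p : X → ℕ}
    (ha : Measurable a) (hp : Measurable p) (hpfin : condEnt F μ (fibers p) ≠ ⊤) {Q : ℕ → Set X}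
    (hQ : ∀ i, MeasurableSet (Q i))
    (hQa : SubsetMod (sigmaG G (range (fibers a)) ⊔ F ⊔ invSigma G X) μ (range Q)) :
    outerRokhlin G (range (fibers p)) F μ ≤ condEnt (F ⊔ invSigma G X) μ (fibers a) +
      condEnt (MeasurableSpace.generateFrom (range Q) ⊔ F) μ (fibers p) := by
  have hm : F ⊔ invSigma G X ≤ mX := sup_le hF invSigma_le
  have hm' : MeasurableSpace.generateFrom (range Q) ⊔ (F ⊔ invSigma G X) ≤ mX :=
    sup_le (MeasurableSpace.generateFrom_le (forall_mem_range.2 hQ)) hm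
  rw [sup_assoc] at hQa
  have hp_meas := measurableSet_fibers hp
  have hpfin' := ne_top_of_le_ne_top hpfin (condEnt_anti μ le_sup_left hm hp_meas)
  refine ENNReal.le_of_forall_pos_le_add fun ε hε _ => ?_
  calc outerRokhlin G (range (fibers p)) F μ
      ≤ condEnt (F ⊔ invSigma G X) μ (fibers a) +
        condEnt (MeasurableSpace.generateFrom (range Q) ⊔ (F ⊔ invSigma G X)) μ (fibers p) + ε :=
      (recoverableOn_univ le_sup_right le_sup_right hm' (hFinv.sup invariantAlg_invSigma) ha
        (fun _ hM haM => hQa.generateFrom_sup_le hM haM) hp hpfin'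
        (ENNReal.coe_pos.2 hε).ne').outerRokhlin_le hFinv
    _ ≤ condEnt (F ⊔ invSigma G X) μ (fibers a) +
        condEnt (MeasurableSpace.generateFrom (range Q) ⊔ F) μ (fibers p) + ε := by
      gcongr
      exact condEnt_anti μ (sup_le_sup_left le_sup_left _) hm' hp_meas

lemma outerRokhlin_le_add_condEnt (hF : F ≤ mX) (hFinv : InvariantAlg G F) {P Q : ℕ → Set X}
    (hP : IsPartition P) (hQ : ∀ i, MeasurableSet (Q i)) (hPfin : condEnt F μ P ≠ ⊤) :
    outerRokhlin G (range P) F μ ≤ outerRokhlin G (range Q) F μ +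
      condEnt (MeasurableSpace.generateFrom (range Q) ⊔ F) μ P := by
  obtain ⟨p, hp, rfl⟩ := hP.exists_eq_fibers
  rw [outerRokhlin.eq_1 G (range Q), ENNReal.sInf_add]
  refine le_iInf₂ ?_
  rintro _ ⟨α, hα, hQα, rfl⟩
  obtain ⟨a, ha, rfl⟩ := hα.exists_eq_fibers
  exact outerRokhlin_fibers_le hF hFinv ha hp hPfin hQ hQα

end OuterRokhlin

/-- Lemma 5.2.(iii): `|rh(P|F) − rh(Q|F)| ≤ dR_μ(P, Q | F)`, stated as
the two corresponding one-sided inequalities in `[0,∞]`. -/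
theorem statement12 {G X : Type*} (F : MeasurableSpace X) [Group G] [Countable G]
    [mX : MeasurableSpace X] [StandardBorelSpace X] [MulAction G X]
    (μ : Measure X) [IsProbabilityMeasure μ] (hpmp : IsPmp G μ)
    (hF : F ≤ mX) (hFinv : InvariantAlg G F)
    (P Q : ℕ → Set X) (hP : IsPartition P) (hQ : IsPartition Q)
    (hPfin : condEnt F μ P < ⊤) (hQfin : condEnt F μ Q < ⊤) :
    outerRokhlin G (Set.range P) F μ ≤
        outerRokhlin G (Set.range Q) F μ +
          (condEnt (MeasurableSpace.generateFrom (Set.range Q) ⊔ F) μ P +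
            condEnt (MeasurableSpace.generateFrom (Set.range P) ⊔ F) μ Q) ∧
      outerRokhlin G (Set.range Q) F μ ≤
        outerRokhlin G (Set.range P) F μ +
          (condEnt (MeasurableSpace.generateFrom (Set.range Q) ⊔ F) μ P +
            condEnt (MeasurableSpace.generateFrom (Set.range P) ⊔ F) μ Q) := by
  have : MeasurableConstSMul G X := ⟨fun g => (hpmp g).measurable⟩
  have : SMulInvariantMeasure G X μ :=
    ⟨fun g s hs => (hpmp g).measure_preimage hs.nullMeasurableSet⟩
  exact
    ⟨(outerRokhlin_le_add_condEnt hF hFinv hP hQ.1 hPfin.ne).trans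
        (add_le_add_right le_self_add _),
      (outerRokhlin_le_add_condEnt hF hFinv hQ hP.1 hQfin.ne).trans
        (add_le_add_right le_add_self _)⟩
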